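/- arXiv:1709.00210 — 3 statements merged into one kernel-verified Lean document; each statement's English description precedes it below -/
import Mathlib

section
/- Let 0 < α < 1, T > 0, let f : [0,∞) × ℝ^s → ℝ^s be continuous with ‖f(t,x) − f(t,y)‖ ≤ L(t)‖x−y‖ for a bounded nonnegative L, and let ξ ∈ C_{1-α}([0,T], ℝ^s). Then the function t ↦ ∫₀^t (t-τ)^{α-1} f(τ, ξ(τ)) dτ is continuous on (0,T]. -/
open Filter Topology MeasureTheory

/-- Membership in `C_{1-α}([0,T], ℝ^s)`: continuous on `(0,T]` and the limit
`lim_{t→0⁺} t^{1-α} ξ(t)` exists. -/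
def memC (α : ℝ) {s : ℕ} (T : ℝ) (x : ℝ → (Fin s → ℝ)) : Prop :=
  ContinuousOn x (Set.Ioc 0 T) ∧
  ∃ l : Fin s → ℝ, Tendsto (fun t : ℝ => t ^ (1 - α) • x t) (𝓝[>] 0) (𝓝 l)

theorem aux_beta (α : ℝ) (hα0 : 0 < α) :
    IntervalIntegrable (fun u : ℝ => (1 - u) ^ (α - 1) * u ^ (α - 1)) volume 0 1 := by
  have h := (Complex.betaIntegral_convergent (u := (α : ℂ)) (v := (α : ℂ)) (by simpa) (by simpa)).norm
  rw [intervalIntegrable_iff_integrableOn_Ioo_of_le zero_le_one] at h ⊢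
  refine h.congr_fun (fun u hu => ?_) measurableSet_Ioo
  have h1 : (0:ℝ) < 1 - u := by linarith [hu.2]
  have e : (1 - (u:ℂ)) = ((1 - u : ℝ) : ℂ) := by push_cast; rfl
  simp only [norm_mul]
  rw [e, Complex.norm_cpow_eq_rpow_re_of_pos hu.1, Complex.norm_cpow_eq_rpow_re_of_pos h1]
  simp [mul_comm]

theorem aux_bound (α T : ℝ) (hα1 : α < 1) (s : ℕ) (ξ : ℝ → (Fin s → ℝ)) (hξ : memC α T ξ) :
    ∃ B : ℝ, 0 ≤ B ∧ ∀ t ∈ Set.Ioc 0 T, t ^ (1 - α) * ‖ξ t‖ ≤ B := by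
  obtain ⟨hc, l, hl⟩ := hξ
  have h1 : ∀ᶠ t in 𝓝[>] (0:ℝ), ‖t ^ (1 - α) • ξ t‖ < ‖l‖ + 1 :=
    hl.norm.eventually (gt_mem_nhds (by linarith))
  obtain ⟨δ, hδ, hδ'⟩ := mem_nhdsGT_iff_exists_Ioo_subset.1 h1
  have hδ0 : (0:ℝ) < δ := hδ
  have h2 : ContinuousOn (fun t : ℝ => t ^ (1 - α) • ξ t) (Set.Icc δ T) := by
    refine ContinuousOn.smul (f := fun t : ℝ => t ^ (1 - α)) (g := ξ) ?_
      (hc.mono fun t (ht : t ∈ Set.Icc δ T) => ⟨hδ0.trans_le ht.1, ht.2⟩)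
    exact continuousOn_id.rpow_const fun t ht => Or.inr (by linarith)
  obtain ⟨B, hB⟩ := isCompact_Icc.exists_bound_of_continuousOn h2
  have e : ∀ t : ℝ, 0 < t → t ^ (1 - α) * ‖ξ t‖ = ‖t ^ (1 - α) • ξ t‖ := fun t ht => by
    rw [norm_smul, Real.norm_of_nonneg (Real.rpow_nonneg ht.le _)]
  refine ⟨max (‖l‖ + 1) B, le_max_of_le_left (by positivity), fun t ht => ?_⟩
  rw [e t ht.1]
  rcases lt_or_ge t δ with h | h
  · exact le_max_of_le_left (le_of_lt (hδ' ⟨ht.1, h⟩))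
  · exact le_max_of_le_right (hB t ⟨h, ht.2⟩)

theorem aux_cont (α T K : ℝ) (hα0 : 0 < α) (hα1 : α < 1) (s : ℕ) (hK : 0 ≤ K)
    (g : ℝ → (Fin s → ℝ)) (hg : ContinuousOn g (Set.Ioc 0 T))
    (hgK : ∀ t ∈ Set.Ioc 0 T, ‖g t‖ ≤ K * t ^ (α - 1)) :
    ContinuousOn (fun t : ℝ => ∫ τ in (0:ℝ)..t, (t - τ) ^ (α - 1) • g τ) (Set.Ioc 0 T) := by
  have key : ∀ t ∈ Set.Ioc 0 T, (∫ τ in (0:ℝ)..t, (t - τ) ^ (α - 1) • g τ) =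
      t ^ α • ∫ u in (0:ℝ)..1, (1 - u) ^ (α - 1) • g (t * u) := by
    intro t ht
    have h := intervalIntegral.smul_integral_comp_mul_left
      (fun τ => (t - τ) ^ (α - 1) • g τ) t (a := 0) (b := 1)
    simp only [mul_zero, mul_one] at h
    rw [← h, ← intervalIntegral.integral_smul, ← intervalIntegral.integral_smul]
    refine intervalIntegral.integral_congr fun u hu => ?_
    rw [Set.uIcc_of_le zero_le_one] at hu
    have e : t - t * u = t * (1 - u) := by ring
    have e2 : t ^ α = t * t ^ (α - 1) := by
      rw [Real.rpow_sub_one ht.1.ne']; field_simp [ht.1.ne']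
    simp only [smul_smul]
    rw [e, Real.mul_rpow ht.1.le (by linarith [hu.2]), e2, mul_assoc]
  refine ContinuousOn.congr ?_ key
  refine ContinuousOn.smul (continuousOn_id.rpow_const fun t ht => Or.inr hα0.le) ?_
  intro t₀ ht₀
  have hmem : ∀ t ∈ Set.Ioc 0 T, ∀ u ∈ Set.Ioc (0:ℝ) 1, t * u ∈ Set.Ioc 0 T := fun t ht u hu =>
    ⟨mul_pos ht.1 hu.1, by nlinarith [ht.1, ht.2, hu.1, hu.2]⟩
  refine intervalIntegral.continuousWithinAt_of_dominated_interval
    (bound := fun u => (K * (t₀ / 2) ^ (α - 1)) * ((1 - u) ^ (α - 1) * u ^ (α - 1))) ?_ ?_ ?_ ?_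
  · filter_upwards [self_mem_nhdsWithin] with t ht
    rw [Set.uIoc_of_le zero_le_one]
    refine AEStronglyMeasurable.smul (f := fun u : ℝ => (1 - u) ^ (α - 1))
      (g := fun u : ℝ => g (t * u)) ?_ ?_
    · exact (by fun_prop : Measurable fun u : ℝ => (1 - u) ^ (α - 1)).aestronglyMeasurable
    · refine ContinuousOn.aestronglyMeasurable ?_ measurableSet_Ioc
      exact hg.comp (by fun_prop) fun u hu => hmem t ht u hu
  · filter_upwards [self_mem_nhdsWithin,
      mem_nhdsWithin_of_mem_nhds (lt_mem_nhds (half_lt_self ht₀.1))] with t ht ht2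
    refine Filter.Eventually.of_forall fun u hu => ?_
    rw [Set.uIoc_of_le zero_le_one] at hu
    have h0 : 0 < t₀ := ht₀.1
    have h1 : (0:ℝ) ≤ (1 - u) ^ (α - 1) := Real.rpow_nonneg (by linarith [hu.2]) _
    have h2 : (0:ℝ) ≤ u ^ (α - 1) := Real.rpow_nonneg hu.1.le _
    have h3 : t ^ (α - 1) ≤ (t₀ / 2) ^ (α - 1) :=
      Real.rpow_le_rpow_of_nonpos (by positivity) (le_of_lt ht2) (by linarith)
    rw [norm_smul, Real.norm_of_nonneg h1]
    calc _ ≤ (1 - u) ^ (α - 1) * (K * (t * u) ^ (α - 1)) := by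
            gcongr; exact hgK _ (hmem t ht u hu)
      _ = (1 - u) ^ (α - 1) * (K * (t ^ (α - 1) * u ^ (α - 1))) := by
            rw [Real.mul_rpow ht.1.le hu.1.le]
      _ ≤ (1 - u) ^ (α - 1) * (K * ((t₀ / 2) ^ (α - 1) * u ^ (α - 1))) := by gcongr
      _ = _ := by ring
  · exact (aux_beta α hα0).const_mul _
  · refine Filter.Eventually.of_forall fun u hu => ?_
    rw [Set.uIoc_of_le zero_le_one] at hu
    refine ContinuousWithinAt.const_smul ?_ ((1 - u) ^ (α - 1))
    exact (hg.comp (by fun_prop : ContinuousOn (fun t : ℝ => t * u) (Set.Ioc 0 T))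
      fun t ht => hmem t ht u hu) t₀ ht₀

theorem stmt9 (α T : ℝ) (hα0 : 0 < α) (hα1 : α < 1) (hT : 0 < T) (s : ℕ)
    (f : ℝ → (Fin s → ℝ) → (Fin s → ℝ))
    (hfc : ContinuousOn (fun p : ℝ × (Fin s → ℝ) => f p.1 p.2)
      (Set.Ici 0 ×ˢ (Set.univ : Set (Fin s → ℝ))))
    (L : ℝ → ℝ) (hL0 : ∀ t : ℝ, 0 ≤ t → 0 ≤ L t) (hLbd : ∃ C : ℝ, ∀ t : ℝ, 0 ≤ t → L t ≤ C)
    (hLip : ∀ t : ℝ, 0 ≤ t → ∀ x y : Fin s → ℝ, ‖f t x - f t y‖ ≤ L t * ‖x - y‖)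
    (ξ : ℝ → (Fin s → ℝ)) (hξ : memC α T ξ) :
    ContinuousOn (fun t : ℝ => ∫ τ in (0:ℝ)..t, (t - τ) ^ (α - 1) • f τ (ξ τ))
      (Set.Ioc 0 T) := by
  obtain ⟨B, hB0, hB⟩ := aux_bound α T hα1 s ξ hξ
  obtain ⟨C, hC⟩ := hLbd
  have hC0 : 0 ≤ C := (hL0 0 le_rfl).trans (hC 0 le_rfl)
  have hf0 : ContinuousOn (fun t : ℝ => f t 0) (Set.Icc 0 T) :=
    hfc.comp (f := fun t : ℝ => (t, (0 : Fin s → ℝ))) (by fun_prop)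
      fun t ht => ⟨ht.1, Set.mem_univ _⟩
  obtain ⟨M, hM⟩ := isCompact_Icc.exists_bound_of_continuousOn hf0
  have hM0 : 0 ≤ M := (norm_nonneg _).trans (hM 0 ⟨le_rfl, hT.le⟩)
  refine aux_cont α T (T ^ (1 - α) * M + C * B) hα0 hα1 s (by positivity)
    (fun τ => f τ (ξ τ)) ?_ ?_
  · exact hfc.comp (f := fun t : ℝ => (t, ξ t)) (continuousOn_id.prodMk hξ.1)
      fun t ht => ⟨ht.1.le, Set.mem_univ _⟩
  · intro t ht
    have hp : 0 < t ^ (1 - α) := Real.rpow_pos_of_pos ht.1 _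
    have e : t ^ (α - 1) = (t ^ (1 - α))⁻¹ := by
      rw [← Real.rpow_neg ht.1.le]; congr 1; ring
    rw [e, ← div_eq_mul_inv, le_div_iff₀ hp]
    have h1 : ‖f t (ξ t)‖ ≤ M + C * ‖ξ t‖ := by
      have h2 := hLip t ht.1.le (ξ t) 0
      rw [sub_zero] at h2
      have h3 := mul_le_mul_of_nonneg_right (hC t ht.1.le) (norm_nonneg (ξ t))
      have h4 := hM t ⟨ht.1.le, ht.2⟩
      have h5 := norm_le_norm_add_norm_sub' (f t (ξ t)) (f t 0)
      linarith
    have h6 : t ^ (1 - α) ≤ T ^ (1 - α) := Real.rpow_le_rpow ht.1.le ht.2 (by linarith)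
    calc _ ≤ (M + C * ‖ξ t‖) * t ^ (1 - α) := by gcongr
      _ = t ^ (1 - α) * M + C * (t ^ (1 - α) * ‖ξ t‖) := by ring
      _ ≤ _ := by gcongr; exact hB t ht
end

section
/- Let 0 < α < 1, let A be a real s×s matrix all of whose (complex) eigenvalues λ satisfy λ ≠ 0 and |arg λ| > απ/2, let Q : [0,∞) → ℝ^{s×s} be continuous with q := sup_{t≥0} t^{1-α} ∫₀^t (t-τ)^{α-1} ‖E_{α,α}((t-τ)^α A) Q(τ)‖ τ^{α-1} dτ < 1, and let g : [0,∞) → ℝ^s be continuous with sup_{t≥0} t^{1-α} ∫₀^t (t-τ)^{α-1} ‖E_{α,α}((t-τ)^α A) g(τ)‖ dτ < ∞. Then for every x₀ ∈ ℝ^s there is a unique φ ∈ C⁰_{1-α}([0,∞), ℝ^s) satisfying φ(t) = t^{α-1} E_{α,α}(t^α A) x₀ + ∫₀^t (t-τ)^{α-1} E_{α,α}((t-τ)^α A) Q(τ) φ(τ) dτ + ∫₀^t (t-τ)^{α-1} E_{α,α}((t-τ)^α A) g(τ) dτ for all t > 0; in particular lim_{t→∞} φ(t) = 0. -/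
open Filter Topology MeasureTheory

attribute [local instance] Matrix.linftyOpNormedAddCommGroup Matrix.linftyOpNormedRing

/-- The matrix Mittag-Leffler function `E_{α,β}(B) = ∑ Bᵏ / Γ(αk + β)`. -/
noncomputable def ML {s : ℕ} (α β : ℝ) (B : Matrix (Fin s) (Fin s) ℝ) :
    Matrix (Fin s) (Fin s) ℝ :=
  ∑' k : ℕ, (Real.Gamma (α * k + β))⁻¹ • B ^ k

/-- Membership in `C⁰_{1-α}([0,∞), ℝ^s)`: continuous on `(0,∞)`, the limit
`lim_{t→0⁺} t^{1-α} x(t)` exists, and `sup_{t≥0} t^{1-α} ‖x(t)‖ < ∞`. -/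
def memC0inf (α : ℝ) {s : ℕ} (x : ℝ → (Fin s → ℝ)) : Prop :=
  ContinuousOn x (Set.Ioi 0) ∧
  (∃ l : Fin s → ℝ, Tendsto (fun t : ℝ => t ^ (1 - α) • x t) (𝓝[>] 0) (𝓝 l)) ∧
  (∃ C : ℝ, ∀ t : ℝ, 0 ≤ t → t ^ (1 - α) * ‖x t‖ ≤ C)

theorem gammaC {b : ℝ} {r : ℂ} (hb : 0 < b) (hr : 0 < r.re) :
    ∫ x in Set.Ioi (0:ℝ), (x : ℂ) ^ ((b : ℂ) - 1) * Complex.exp (-(r * x)) = (1 / r) ^ (b : ℂ) * Complex.Gamma b := by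
  have hopen : IsOpen {z : ℂ | 0 < z.re} := isOpen_lt continuous_const Complex.continuous_re
  have hmeas : ∀ z : ℂ, AEStronglyMeasurable (fun x : ℝ => (x : ℂ) ^ ((b : ℂ) - 1) * Complex.exp (-(z * x))) (volume.restrict (Set.Ioi 0)) := by
    intro z
    apply ContinuousOn.aestronglyMeasurable _ measurableSet_Ioi
    intro x hx
    have hx' : (0:ℝ) < x := hx
    apply ContinuousAt.continuousWithinAt
    apply ContinuousAt.mul _ (by fun_prop)
    apply ContinuousAt.cpow (by fun_prop) (by fun_prop)
    left; simpa using hx'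
  have hnorm : ∀ z : ℂ, ∀ x ∈ Set.Ioi (0:ℝ), ‖(x : ℂ) ^ ((b : ℂ) - 1) * Complex.exp (-(z * x))‖ = x ^ (b - 1) * Real.exp (-z.re * x ^ (1:ℝ)) := by
    intro z x hx
    have hx' : (0:ℝ) < x := hx
    rw [norm_mul, Complex.norm_cpow_eq_rpow_re_of_pos hx', Complex.norm_exp]
    simp
  have hd : DifferentiableOn ℂ (fun z : ℂ => ∫ x in Set.Ioi (0:ℝ), (x : ℂ) ^ ((b : ℂ) - 1) * Complex.exp (-(z * x))) {z : ℂ | 0 < z.re} := by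
    intro z hz
    have hz' : 0 < z.re := hz
    apply DifferentiableAt.differentiableWithinAt
    have hs : {w : ℂ | z.re / 2 < w.re} ∈ 𝓝 z := by
      apply (isOpen_lt continuous_const Complex.continuous_re).mem_nhds
      simp; linarith
    have := hasDerivAt_integral_of_dominated_loc_of_deriv_le (μ := volume.restrict (Set.Ioi (0:ℝ))) (𝕜 := ℂ)
      (F := fun z x => ((x : ℝ) : ℂ) ^ ((b : ℂ) - 1) * Complex.exp (-(z * x)))
      (F' := fun z x => ((x : ℝ) : ℂ) ^ ((b : ℂ) - 1) * Complex.exp (-(z * x)) * (-x))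
      (bound := fun x => x ^ b * Real.exp (-(z.re / 2) * x ^ (1:ℝ))) hs (Eventually.of_forall hmeas) ?_ ?_ ?_ ?_ ?_
    · exact this.2.differentiableAt
    · refine (integrableOn_rpow_mul_exp_neg_mul_rpow (s := b - 1) (p := 1) (b := z.re) (by linarith) one_pos hz').mono' (hmeas z) ?_
      filter_upwards [ae_restrict_mem measurableSet_Ioi] with x hx
      rw [hnorm z x hx]
    · exact (hmeas z).mul (Continuous.aestronglyMeasurable (by fun_prop))
    · filter_upwards [ae_restrict_mem measurableSet_Ioi] with x hx w hw
      have hx' : (0:ℝ) < x := hx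
      rw [norm_mul, hnorm w x hx, norm_neg, Complex.norm_of_nonneg hx'.le, mul_right_comm]
      have : x ^ (b - 1) * x = x ^ b := by
        rw [← Real.rpow_add_one hx'.ne']; simp
      rw [this, Real.rpow_one]
      have hw' : z.re / 2 < w.re := hw
      gcongr
    · exact integrableOn_rpow_mul_exp_neg_mul_rpow (by linarith) one_pos (by linarith)
    · refine Eventually.of_forall fun x w _ => ?_
      have h1 : HasDerivAt (fun w : ℂ => -(w * x)) (-(1 * x : ℂ)) w := ((hasDerivAt_id w).mul_const _).neg
      have := (h1.cexp).const_mul ((x : ℂ) ^ ((b : ℂ) - 1))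
      exact this.congr_deriv (by ring)
  have hd2 : DifferentiableOn ℂ (fun z : ℂ => (1 / z) ^ (b : ℂ) * Complex.Gamma b) {z : ℂ | 0 < z.re} := by
    intro z hz
    have hz' : 0 < z.re := hz
    have hz0 : z ≠ 0 := by rintro rfl; simp at hz'
    apply DifferentiableAt.differentiableWithinAt
    apply DifferentiableAt.mul_const
    apply DifferentiableAt.cpow_const
    · exact (differentiableAt_const _).div differentiableAt_id hz0
    · left
      rw [one_div, Complex.inv_re]
      have := Complex.normSq_pos.2 hz0
      positivity
  have hpre : IsPreconnected {z : ℂ | 0 < z.re} := (convex_halfSpace_re_gt 0).isPreconnected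
  refine (hd.analyticOnNhd hopen).eqOn_of_preconnected_of_frequently_eq (hd2.analyticOnNhd hopen) hpre (z₀ := 1) (by simp) ?_ hr
  have htend : Tendsto (fun n : ℕ => ((1 + 1 / ((n : ℝ) + 1) : ℝ) : ℂ)) atTop (𝓝[≠] 1) := by
    rw [tendsto_nhdsWithin_iff]
    constructor
    · have := (tendsto_one_div_add_atTop_nhds_zero_nat (𝕜 := ℝ)).const_add 1
      rw [add_zero] at this
      have h2 := (Complex.continuous_ofReal.tendsto 1).comp this
      simpa [Function.comp_def] using h2
    · refine Eventually.of_forall fun n => ?_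
      have : (1 + 1 / ((n : ℝ) + 1) : ℝ) ≠ 1 := by
        have : (0:ℝ) < 1 / ((n : ℝ) + 1) := by positivity
        linarith
      simp only [Set.mem_compl_iff, Set.mem_singleton_iff]
      exact_mod_cast this
  refine htend.frequently (Frequently.of_forall fun n => ?_)
  exact Complex.integral_cpow_mul_exp_neg_mul_Ioi (a := b) (by simpa using hb) (by positivity)

theorem brom_int {b c : ℝ} (hb : 1 < b) (hc : 0 < c) :
    Integrable (fun y : ℝ => ‖(c + y * Complex.I : ℂ)‖ ^ (-b)) := by
  have h := (integrable_one_add_norm (E := ℝ) (μ := volume) (r := b) (by simpa using hb)).const_mul ((min c 1 / 2) ^ (-b))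
  refine h.mono' ?_ ?_
  · apply Continuous.aestronglyMeasurable
    apply Continuous.rpow_const (by fun_prop)
    intro y; left
    rw [norm_ne_zero_iff]
    intro h0
    have := congrArg Complex.re h0
    simp at this; linarith
  · refine Eventually.of_forall fun y => ?_
    have h1 := Complex.abs_re_le_norm (c + y * Complex.I)
    have h2 := Complex.abs_im_le_norm (c + y * Complex.I)
    simp at h1 h2
    have hm : 0 < min c 1 := lt_min hc one_pos
    have h3 : min c 1 / 2 * (1 + ‖y‖) ≤ ‖(c + y * Complex.I : ℂ)‖ := by
      rw [Real.norm_eq_abs]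
      have := le_abs_self c
      have h5 := min_le_left c 1
      have h6 := min_le_right c 1
      nlinarith [abs_nonneg y]
    rw [Real.norm_of_nonneg (by positivity), ← Real.mul_rpow (by positivity) (by positivity)]
    apply Real.rpow_le_rpow_of_nonpos (by positivity) h3 (by linarith)

theorem brom {b c t : ℝ} (hb : 1 < b) (hc : 0 < c) (ht : 0 < t) :
    ∫ y : ℝ, Complex.exp ((c + y * Complex.I) * t) * (c + y * Complex.I : ℂ) ^ (-b : ℂ)
      = ((2 * Real.pi * (t ^ (b - 1) / Real.Gamma b) : ℝ) : ℂ) := by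
  set h : ℝ → ℂ := Set.indicator (Set.Ioi 0) (fun x => (x : ℂ) ^ ((b : ℂ) - 1) * Complex.exp (-(c * x))) with hh
  have hF : ∀ ξ : ℝ, FourierTransform.fourier h ξ =
      Complex.Gamma b * (c + (2 * Real.pi * ξ : ℝ) * Complex.I : ℂ) ^ (-b : ℂ) := by
    intro ξ
    rw [Real.fourier_eq']
    have e1 : ∀ v : ℝ, Complex.exp (↑(-2 * Real.pi * inner ℝ v ξ) * Complex.I) • h v =
        Set.indicator (Set.Ioi 0) (fun x : ℝ => (x : ℂ) ^ ((b : ℂ) - 1) * Complex.exp (-((c + (2 * Real.pi * ξ : ℝ) * Complex.I) * x))) v := by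
      intro v
      by_cases hv : v ∈ Set.Ioi (0:ℝ)
      · rw [hh, Set.indicator_of_mem hv, Set.indicator_of_mem hv, smul_eq_mul, mul_left_comm, ← Complex.exp_add]
        congr 2
        simp
        ring
      · rw [hh, Set.indicator_of_notMem hv, Set.indicator_of_notMem hv, smul_zero]
    simp_rw [e1]
    rw [integral_indicator measurableSet_Ioi, gammaC (by linarith) (by simpa using hc)]
    rw [mul_comm, one_div, Complex.inv_cpow, Complex.cpow_neg]
    intro h0
    have := Complex.arg_eq_pi_iff.1 h0
    simp at this; linarith
  have hint : Integrable h := by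
    rw [hh, integrable_indicator_iff measurableSet_Ioi]
    have := integrableOn_rpow_mul_exp_neg_mul_rpow (s := b - 1) (p := 1) (b := c) (by linarith) one_pos hc
    refine (this.ofReal (𝕜 := ℂ)).congr ?_
    filter_upwards [ae_restrict_mem measurableSet_Ioi] with x hx
    have : (0:ℝ) < x := hx
    simp [Complex.ofReal_cpow this.le]
  have hFint : Integrable (FourierTransform.fourier h) := by
    rw [funext hF]
    apply Integrable.const_mul
    have := (brom_int hb hc).comp_mul_left' (R := 2 * Real.pi) (by positivity)
    refine this.mono' ?_ ?_
    · apply Continuous.aestronglyMeasurable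
      apply Continuous.cpow (by fun_prop) (by fun_prop)
      intro y; left; simpa using hc
    · refine Eventually.of_forall fun y => ?_
      rw [← Complex.ofReal_neg, Complex.norm_cpow_real]
  have hcont : ContinuousAt h t := by
    have : h =ᶠ[𝓝 t] (fun x : ℝ => (x : ℂ) ^ ((b : ℂ) - 1) * Complex.exp (-(c * x))) := by
      filter_upwards [Ioi_mem_nhds ht] with x hx
      rw [hh, Set.indicator_of_mem hx]
    refine ContinuousAt.congr ?_ this.symm
    apply ContinuousAt.mul _ (by fun_prop)
    apply ContinuousAt.cpow (by fun_prop) (by fun_prop)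
    left; simpa using ht
  have key := hint.fourierInv_fourier_eq hFint hcont
  rw [Real.fourierInv_eq'] at key
  simp_rw [hF] at key
  have e2 := Measure.integral_comp_mul_left (fun y : ℝ => Complex.exp (y * t * Complex.I) * (Complex.Gamma b * (c + y * Complex.I : ℂ) ^ (-b : ℂ))) (2 * Real.pi)
  have e3 : ∀ y : ℝ, Complex.exp ((c + y * Complex.I) * t) * (c + y * Complex.I : ℂ) ^ (-b : ℂ) =
     (Complex.exp (c * t) / Complex.Gamma b) * (Complex.exp (y * t * Complex.I) * (Complex.Gamma b * (c + y * Complex.I : ℂ) ^ (-b : ℂ))) := by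
    intro y
    have : Complex.Gamma b ≠ 0 := Complex.Gamma_ne_zero_of_re_pos (by simp; linarith)
    have e5 : Complex.exp ((c + y * Complex.I) * t) = Complex.exp (c * t) * Complex.exp (y * t * Complex.I) := by
      rw [← Complex.exp_add]; congr 1; ring
    rw [e5]
    field_simp
  simp_rw [e3]
  rw [integral_const_mul]
  have e4 : (∫ (v : ℝ), Complex.exp (↑(2 * Real.pi * inner ℝ v t) * Complex.I) • (Complex.Gamma ↑b * (↑c + ↑(2 * Real.pi * v) * Complex.I) ^ (-b:ℂ))) = ∫ (x : ℝ), (fun y : ℝ => Complex.exp (y * t * Complex.I) * (Complex.Gamma b * (c + y * Complex.I : ℂ) ^ (-b : ℂ))) (2 * Real.pi * x) := by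
    apply integral_congr_ae
    refine Eventually.of_forall fun y => ?_
    simp
    left; congr 1; ring
  rw [e4, e2, hh, Set.indicator_of_mem (show t ∈ Set.Ioi (0:ℝ) from ht), abs_of_pos (by positivity)] at key
  rw [Complex.real_smul] at key
  have hpi : ((2 * Real.pi : ℝ) : ℂ) ≠ 0 := by
    exact_mod_cast (by positivity : (2 * Real.pi) ≠ 0)
  have key2 : (∫ (y : ℝ), (fun y : ℝ => Complex.exp (y * t * Complex.I) * (Complex.Gamma b * (c + y * Complex.I : ℂ) ^ (-b : ℂ))) y) = (2 * Real.pi : ℝ) * (t ^ (b - 1 : ℂ) * Complex.exp (-(c * t))) := by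
    rw [← key, ← mul_assoc, ← Complex.ofReal_mul, mul_inv_cancel₀ (by positivity)]; simp
  rw [key2]
  push_cast
  rw [Complex.ofReal_cpow ht.le, Complex.exp_neg, Complex.Gamma_ofReal]
  have : Complex.exp (c * t) ≠ 0 := Complex.exp_ne_zero _
  push_cast
  field_simp

noncomputable def Gk {𝔸 : Type*} [NormedRing 𝔸] [NormedAlgebra ℂ 𝔸] (α : ℝ) (a : 𝔸) (s : ℂ) : 𝔸 :=
  ((α : ℂ) * s ^ ((α : ℂ) - 1)) • (resolvent a (s ^ (α : ℂ))) ^ 2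

theorem Gk_hasSum {𝔸 : Type*} [NormedRing 𝔸] [NormedAlgebra ℂ 𝔸] [CompleteSpace 𝔸] {α : ℝ} (a : 𝔸) {s : ℂ}
    (hs : 0 < s.re) (ha : ‖a‖ < ‖s‖ ^ α) :
    HasSum (fun k : ℕ => (((α * k + α : ℝ) : ℂ) * s ^ (-((α * k + α + 1 : ℝ) : ℂ))) • a ^ k) (Gk α a s) := by
  have hs0 : s ≠ 0 := by rintro rfl; simp at hs
  set z := s ^ (α : ℂ) with hz
  have hz0 : z ≠ 0 := by rw [hz, Complex.cpow_ne_zero_iff]; left; exact hs0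
  have hnz : ‖z‖ = ‖s‖ ^ α := by rw [hz, Complex.norm_cpow_real]
  have hx : ‖z⁻¹ • a‖ < 1 := by
    rw [norm_smul, norm_inv, hnz, inv_mul_lt_iff₀ (by positivity)]; simpa using ha
  have h1 := hasSum_choose_mul_geometric_of_norm_lt_one' 1 hx
  have h2 := h1.const_smul ((α : ℂ) * s ^ ((α : ℂ) - 1) * z⁻¹ ^ 2)
  have h3 := spectrum.units_smul_resolvent_self (r := Units.mk0 z hz0) (a := a)
  have h4 : resolvent a z = z⁻¹ • Ring.inverse (1 - z⁻¹ • a) := by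
    rw [eq_inv_smul_iff₀ hz0]
    simpa [resolvent, Units.smul_def] using h3
  convert! h2 using 1
  · ext k
    rw [Nat.choose_one_right, smul_pow, ← nsmul_eq_mul, ← Nat.cast_smul_eq_nsmul ℂ, smul_smul, smul_smul]
    congr 1
    have e1 : s ^ (-((α * k + α + 1 : ℝ) : ℂ)) = s ^ ((α : ℂ) - 1) * z⁻¹ ^ 2 * z⁻¹ ^ k := by
      rw [mul_assoc, ← pow_add, hz, ← Complex.cpow_neg, ← Complex.cpow_mul_nat, ← Complex.cpow_add _ _ hs0]
      congr 1
      push_cast; ring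
    rw [e1]; push_cast; ring
  · rw [Gk, ← hz, h4, smul_pow, smul_smul]

theorem line_hasSum {𝔸 : Type*} [NormedRing 𝔸] [NormedAlgebra ℂ 𝔸] [CompleteSpace 𝔸] {α : ℝ} (hα : 0 < α) (a : 𝔸)
    {c t : ℝ} (hc : 0 < c) (ht : 0 < t) (ha : ‖a‖ < c ^ α) :
    HasSum (fun k : ℕ => ((2 * Real.pi * (t ^ (α * k + α) / Real.Gamma (α * k + α)) : ℝ) : ℂ) • a ^ k)
      (∫ y : ℝ, Complex.exp ((c + y * Complex.I) * t) • Gk α a (c + y * Complex.I)) := by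
  set F : ℕ → ℝ → 𝔸 := fun k y => (((α * k + α : ℝ) : ℂ) * (Complex.exp ((c + y * Complex.I) * t) * (c + y * Complex.I) ^ (-((α * k + α + 1 : ℝ) : ℂ)))) • a ^ k with hF
  have hkp : ∀ k : ℕ, 0 < α * k + α := fun k => by positivity
  have hcn : ∀ y : ℝ, c ≤ ‖(c + y * Complex.I : ℂ)‖ := by
    intro y
    have h1 := Complex.abs_re_le_norm (c + y * Complex.I)
    simp at h1
    exact (le_abs_self c).trans h1
  have hsum : ∀ y : ℝ, ∑' k, F k y = Complex.exp ((c + y * Complex.I) * t) • Gk α a (c + y * Complex.I) := by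
    intro y
    have h := (Gk_hasSum a (s := c + y * Complex.I) (by simpa using hc) (ha.trans_le (Real.rpow_le_rpow hc.le (hcn y) hα.le))).const_smul (Complex.exp ((c + y * Complex.I) * t))
    rw [← h.tsum_eq]
    congr 1; ext k
    rw [hF, smul_smul]; dsimp only
    congr 1; ring
  have hint : ∀ k, ∫ y, F k y = ((2 * Real.pi * (t ^ (α * k + α) / Real.Gamma (α * k + α)) : ℝ) : ℂ) • a ^ k := by
    intro k
    rw [hF]; dsimp only
    rw [integral_smul_const, integral_const_mul, brom (by linarith [hkp k]) hc ht]
    congr 1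
    rw [← Complex.ofReal_mul]; congr 1
    have := hkp k
    have h2 := Real.Gamma_pos_of_pos this
    rw [add_sub_cancel_right, Real.Gamma_add_one this.ne']
    field_simp
  have hnorm : ∀ k y, ‖F k y‖ ≤ (Real.exp (c * t) * (1 + ‖(1:𝔸)‖)) * ((α * k + α) * (‖a‖ * c ^ (-α)) ^ k) * ‖(c + y * Complex.I : ℂ)‖ ^ (-(α + 1)) := by
    intro k y
    have hpos : 0 < ‖(c + y * Complex.I : ℂ)‖ := hc.trans_le (hcn y)
    have h1 : ‖a ^ k‖ ≤ (1 + ‖(1:𝔸)‖) * ‖a‖ ^ k := by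
      rcases Nat.eq_zero_or_pos k with rfl | hk
      · simp
      · refine (norm_pow_le' a hk).trans ?_
        have := norm_nonneg (1:𝔸)
        have := pow_nonneg (norm_nonneg a) k
        nlinarith
    have h2 : ‖(c + y * Complex.I : ℂ)‖ ^ (-(α * k + α + 1)) ≤ (c ^ (-α)) ^ k * ‖(c + y * Complex.I : ℂ)‖ ^ (-(α + 1)) := by
      have : -(α * k + α + 1) = (-α) * k + (-(α + 1)) := by ring
      rw [this, Real.rpow_add hpos, Real.rpow_mul_natCast hpos.le]
      refine mul_le_mul_of_nonneg_right (pow_le_pow_left₀ (by positivity) ?_ k) (by positivity)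
      exact Real.rpow_le_rpow_of_nonpos hc (hcn y) (neg_nonpos.2 hα.le)
    rw [hF]; dsimp only
    rw [norm_smul, norm_mul, norm_mul, Complex.norm_exp, ← Complex.ofReal_neg, Complex.norm_cpow_real, Complex.norm_of_nonneg (hkp k).le]
    have h3 : ((c + y * Complex.I) * t : ℂ).re = c * t := by simp
    rw [h3]
    calc _ ≤ (α * k + α) * (Real.exp (c * t) * ((c ^ (-α)) ^ k * ‖(c + y * Complex.I : ℂ)‖ ^ (-(α + 1)))) * ((1 + ‖(1:𝔸)‖) * ‖a‖ ^ k) := by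
          have := (hkp k).le
          gcongr
      _ = _ := by rw [mul_pow]; ring
  have hbi := brom_int (b := α + 1) (by linarith) hc
  have hFi : ∀ k, Integrable (F k) := by
    intro k
    refine (hbi.const_mul _).mono' ?_ (Eventually.of_forall (hnorm k))
    apply Continuous.aestronglyMeasurable
    rw [hF]; dsimp only
    apply Continuous.smul _ continuous_const
    apply Continuous.mul continuous_const
    apply Continuous.mul (by fun_prop)
    apply Continuous.cpow (by fun_prop) (by fun_prop)
    intro y; left; simpa using hc
  have hr : ‖(‖a‖ * c ^ (-α))‖ < 1 := by
    rw [Real.norm_of_nonneg (by positivity), Real.rpow_neg hc.le, ← div_eq_mul_inv, div_lt_one (by positivity)]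
    exact ha
  have hS : Summable fun k => ∫ y, ‖F k y‖ := by
    refine Summable.of_nonneg_of_le (fun k => integral_nonneg fun y => norm_nonneg _) 
      (fun k => integral_mono (hFi k).norm (hbi.const_mul _) (hnorm k)) ?_
    simp_rw [integral_const_mul]
    apply Summable.mul_right
    apply Summable.mul_left
    have s1 := (summable_pow_mul_geometric_of_norm_lt_one 1 hr).mul_left α
    have s2 := (summable_geometric_of_norm_lt_one hr).mul_left α
    refine (s1.add s2).congr fun k => ?_
    ring
  have := hasSum_integral_of_summable_integral_norm hFi hS
  simp_rw [hsum, hint] at this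
  exact this

theorem mem_res {𝔸 : Type*} [NormedRing 𝔸] [NormedAlgebra ℂ 𝔸] {α : ℝ} (hα : 0 < α) (hα1 : α < 1) (a : 𝔸)
    (hspec : ∀ μ ∈ spectrum ℂ a, μ ≠ 0 ∧ α * Real.pi / 2 < |Complex.arg μ|) {s : ℂ} (hs : 0 ≤ s.re) :
    s ^ (α : ℂ) ∈ resolventSet ℂ a := by
  by_contra h
  obtain ⟨h1, h2⟩ := hspec _ h
  have hs0 : s ≠ 0 := by
    rintro rfl
    apply h1
    rw [Complex.zero_cpow]; exact_mod_cast hα.ne'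
  have h3 : |s.arg| ≤ Real.pi / 2 := Complex.abs_arg_le_pi_div_two_iff.2 hs
  have him : (Complex.log s * (α : ℂ)).im = α * s.arg := by
    simp [Complex.mul_im, Complex.log_im, mul_comm]
  have hpi := Real.pi_pos
  have h4 : |α * s.arg| ≤ α * Real.pi / 2 := by
    rw [abs_mul, abs_of_pos hα]; nlinarith
  have h5 := abs_le.1 h4
  have h6 : (s ^ (α : ℂ)).arg = α * s.arg := by
    rw [Complex.cpow_def_of_ne_zero hs0, ← Complex.log_im, Complex.log_exp, him]
    · rw [him]; nlinarith
    · rw [him]; nlinarith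
  rw [h6] at h2
  linarith

theorem res_bound {𝔸 : Type*} [NormedRing 𝔸] [NormedAlgebra ℂ 𝔸] [CompleteSpace 𝔸] {α : ℝ} (hα : 0 < α) (hα1 : α < 1) (a : 𝔸)
    (hspec : ∀ μ ∈ spectrum ℂ a, μ ≠ 0 ∧ α * Real.pi / 2 < |Complex.arg μ|) :
    ∃ M : ℝ, 0 ≤ M ∧ ∀ s : ℂ, 0 ≤ s.re → ‖resolvent a (s ^ (α : ℂ))‖ * (1 + ‖s‖ ^ α) ≤ M := by
  obtain ⟨C, hC⟩ := (spectrum.resolvent_isBigO_inv (𝕜 := ℂ) a).bound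
  rw [← comap_norm_atTop, eventually_comap] at hC
  obtain ⟨R, hR⟩ := eventually_atTop.1 hC
  set R' := max R 1 with hR'
  have hK : IsCompact ({s : ℂ | 0 ≤ s.re} ∩ Metric.closedBall 0 (R' ^ (1 / α))) := by
    apply IsCompact.inter_left (isCompact_closedBall _ _)
    exact isClosed_le continuous_const Complex.continuous_re
  have hcont : ContinuousOn (fun s : ℂ => ‖resolvent a (s ^ (α : ℂ))‖ * (1 + ‖s‖ ^ α)) ({s : ℂ | 0 ≤ s.re} ∩ Metric.closedBall 0 (R' ^ (1 / α))) := by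
    intro s hs
    have hs1 : 0 ≤ s.re := hs.1
    apply ContinuousAt.continuousWithinAt
    apply ContinuousAt.mul
    · apply ContinuousAt.norm
      have h1 := (spectrum.hasDerivAt_resolvent_const_left (mem_res hα hα1 a hspec hs1)).continuousAt
      have h2 : ContinuousAt (fun s : ℂ => s ^ (α : ℂ)) s := Complex.continuousAt_cpow_const_of_re_pos (Or.inl hs1) (by simpa using hα)
      exact ContinuousAt.comp (f := fun s : ℂ => s ^ (α : ℂ)) h1 h2
    · apply ContinuousAt.add continuousAt_const
      exact (continuous_norm.continuousAt).rpow_const (Or.inr hα.le)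
  obtain ⟨M, hM⟩ := hK.exists_bound_of_continuousOn hcont
  refine ⟨max M (2 * |C|), le_max_of_le_right (by positivity), fun s hs => ?_⟩
  by_cases hsR : ‖s‖ ≤ R' ^ (1 / α)
  · exact (le_trans (le_abs_self _) (hM s ⟨hs, by simpa using hsR⟩)).trans (le_max_left _ _)
  · push Not at hsR
    have hR1 : 1 ≤ R' := le_max_right _ _
    have h1 : R' < ‖s‖ ^ α := by
      have := Real.rpow_lt_rpow (by positivity) hsR hα
      rwa [← Real.rpow_mul (by positivity), one_div, inv_mul_cancel₀ hα.ne', Real.rpow_one] at this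
    have h2 : ‖s ^ (α : ℂ)‖ = ‖s‖ ^ α := Complex.norm_cpow_real _ _
    have h3 := hR (‖s‖ ^ α) ((le_max_left _ _).trans h1.le) (s ^ (α : ℂ)) h2
    rw [norm_inv, h2] at h3
    apply le_max_of_le_right
    have hp : 0 < ‖s‖ ^ α := by linarith
    calc _ ≤ (|C| * (‖s‖ ^ α)⁻¹) * (2 * ‖s‖ ^ α) := by
          apply mul_le_mul
          · exact h3.trans (by gcongr; exact le_abs_self C)
          · linarith
          · positivity
          · positivity
      _ = _ := by field_simp

noncomputable def Wk (α : ℝ) (y : ℝ) : ℝ := α * |y| ^ (α - 1) / (1 + |y| ^ α) ^ 2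

theorem Wk_int {α : ℝ} (hα : 0 < α) : Integrable (Wk α) := by
  have hm : Measurable (Wk α) := by unfold Wk; fun_prop
  have hpos : IntegrableOn (Wk α) (Set.Ioi 0) := by
    rw [← Set.Ioc_union_Ioi_eq_Ioi (zero_le_one' ℝ)]
    apply IntegrableOn.union
    · have h1 : IntegrableOn (fun y : ℝ => α * y ^ (α - 1)) (Set.Ioc 0 1) := by
        have := (intervalIntegral.intervalIntegrable_rpow' (a := 0) (b := 1) (r := α - 1) (by linarith)).const_mul α
        rwa [intervalIntegrable_iff_integrableOn_Ioc_of_le zero_le_one] at this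
      refine h1.mono' hm.aestronglyMeasurable ?_
      filter_upwards [ae_restrict_mem measurableSet_Ioc] with y hy
      rw [Wk, abs_of_pos hy.1, Real.norm_of_nonneg (by have := hy.1; positivity)]
      have := hy.1
      apply div_le_self (by positivity)
      have : 0 < y ^ α := by positivity
      nlinarith
    · have h1 : IntegrableOn (fun y : ℝ => α * y ^ (-α - 1)) (Set.Ioi 1) :=
        (integrableOn_Ioi_rpow_of_lt (by linarith) one_pos).const_mul α
      refine h1.mono' hm.aestronglyMeasurable ?_
      filter_upwards [ae_restrict_mem measurableSet_Ioi] with y hy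
      have hy1 : (1:ℝ) < y := hy
      have hy0 : (0:ℝ) < y := by linarith
      rw [Wk, abs_of_pos hy0, Real.norm_of_nonneg (by positivity), div_le_iff₀ (by positivity)]
      have e1 : y ^ (α - 1) = y ^ (-α - 1) * (y ^ α) ^ 2 := by
        rw [← Real.rpow_mul_natCast hy0.le, ← Real.rpow_add hy0]; congr 1; push_cast; ring
      rw [e1, ← mul_assoc]
      have : 0 < y ^ α := by positivity
      gcongr
      linarith
  have hneg : IntegrableOn (Wk α) (Set.Iic 0) := by
    rw [integrableOn_Iic_iff_integrableOn_Iio]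
    have := hpos.comp_neg
    simp only [Set.neg_Ioi, neg_zero] at this
    refine this.congr_fun (fun y _ => ?_) measurableSet_Iio
    simp [Wk]
  have := hneg.union hpos
  rwa [Set.Iic_union_Ioi, integrableOn_univ] at this

theorem Wk_tendsto {α : ℝ} (hα : 0 < α) (hα1 : α < 1) : Tendsto (Wk α) atTop (𝓝 0) := by
  have h1 : Tendsto (fun y : ℝ => α * y ^ (-(1 - α))) atTop (𝓝 (α * 0)) := (tendsto_rpow_neg_atTop (by linarith)).const_mul α
  rw [mul_zero] at h1
  refine tendsto_of_tendsto_of_tendsto_of_le_of_le' tendsto_const_nhds h1 ?_ ?_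
  · refine Eventually.of_forall fun y => ?_
    unfold Wk; positivity
  · filter_upwards [eventually_gt_atTop 0] with y hy
    rw [Wk, abs_of_pos hy, neg_sub]
    apply div_le_self (by positivity)
    have : 0 < y ^ α := by positivity
    nlinarith

theorem Gk_bound {𝔸 : Type*} [NormedRing 𝔸] [NormedAlgebra ℂ 𝔸] {α : ℝ} (hα : 0 < α) (hα1 : α < 1) (a : 𝔸)
    {M : ℝ} (hM : ∀ s : ℂ, 0 ≤ s.re → ‖resolvent a (s ^ (α : ℂ))‖ * (1 + ‖s‖ ^ α) ≤ M) {c y : ℝ} (hc : 0 < c) (hy : y ≠ 0) :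
    ‖Gk α a (c + y * Complex.I)‖ ≤ M ^ 2 * Wk α y := by
  set s : ℂ := c + y * Complex.I with hs
  have h1 : |y| ≤ ‖s‖ := by simpa [hs] using Complex.abs_im_le_norm s
  have hyp : 0 < |y| := abs_pos.2 hy
  have h2 := hM s (by simpa [hs] using hc.le)
  have h3 : 1 + |y| ^ α ≤ 1 + ‖s‖ ^ α := by gcongr
  have h4 : ‖resolvent a (s ^ (α : ℂ))‖ ≤ M / (1 + |y| ^ α) := by
    rw [le_div_iff₀ (by positivity)]
    exact (mul_le_mul_of_nonneg_left h3 (norm_nonneg _)).trans h2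
  rw [Gk, norm_smul, norm_mul, Complex.norm_of_nonneg hα.le]
  have h5 : ‖s ^ ((α : ℂ) - 1)‖ ≤ |y| ^ (α - 1) := by
    rw [← Complex.ofReal_one, ← Complex.ofReal_sub, Complex.norm_cpow_real]
    exact Real.rpow_le_rpow_of_nonpos hyp h1 (by linarith)
  have h6 : ‖resolvent a (s ^ (α : ℂ)) ^ 2‖ ≤ (M / (1 + |y| ^ α)) ^ 2 :=
    (norm_pow_le' _ two_pos).trans (by gcongr)
  calc _ ≤ α * |y| ^ (α - 1) * (M / (1 + |y| ^ α)) ^ 2 := by gcongr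
    _ = _ := by rw [Wk, div_pow]; ring

theorem Gk_diff {𝔸 : Type*} [NormedRing 𝔸] [NormedAlgebra ℂ 𝔸] [CompleteSpace 𝔸] {α : ℝ} (hα : 0 < α) (hα1 : α < 1) (a : 𝔸)
    (hspec : ∀ μ ∈ spectrum ℂ a, μ ≠ 0 ∧ α * Real.pi / 2 < |Complex.arg μ|) {s : ℂ} (hs : 0 < s.re) :
    DifferentiableAt ℂ (Gk α a) s := by
  have hsl : s ∈ Complex.slitPlane := Or.inl hs
  have h1 := (spectrum.hasDerivAt_resolvent_const_left (mem_res hα hα1 a hspec hs.le)).differentiableAt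
  have h2 : DifferentiableAt ℂ (fun s : ℂ => s ^ (α : ℂ)) s := differentiableAt_id.cpow_const hsl
  have h3 : DifferentiableAt ℂ (fun s : ℂ => resolvent a (s ^ (α : ℂ))) s := DifferentiableAt.comp (f := fun s : ℂ => s ^ (α : ℂ)) s h1 h2
  have h4 : DifferentiableAt ℂ (fun s : ℂ => (α : ℂ) * s ^ ((α : ℂ) - 1)) s := (differentiableAt_id.cpow_const hsl).const_mul _
  exact h4.smul (h3.pow 2)

theorem line_int {𝔸 : Type*} [NormedRing 𝔸] [NormedAlgebra ℂ 𝔸] [CompleteSpace 𝔸] {α : ℝ} (hα : 0 < α) (hα1 : α < 1) (a : 𝔸)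
    (hspec : ∀ μ ∈ spectrum ℂ a, μ ≠ 0 ∧ α * Real.pi / 2 < |Complex.arg μ|)
    {M : ℝ} (hM : ∀ s : ℂ, 0 ≤ s.re → ‖resolvent a (s ^ (α : ℂ))‖ * (1 + ‖s‖ ^ α) ≤ M) {c t : ℝ} (hc : 0 < c) :
    (∀ y : ℝ, y ≠ 0 → ‖Complex.exp ((c + y * Complex.I) * t) • Gk α a (c + y * Complex.I)‖ ≤ Real.exp (c * t) * (M ^ 2 * Wk α y)) ∧
    Integrable (fun y : ℝ => Complex.exp ((c + y * Complex.I) * t) • Gk α a (c + y * Complex.I)) := by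
  have hb : ∀ y : ℝ, y ≠ 0 → ‖Complex.exp ((c + y * Complex.I) * t) • Gk α a (c + y * Complex.I)‖ ≤ Real.exp (c * t) * (M ^ 2 * Wk α y) := by
    intro y hy
    rw [norm_smul, Complex.norm_exp]
    have h3 : ((c + y * Complex.I) * t : ℂ).re = c * t := by simp
    rw [h3]
    gcongr
    exact Gk_bound hα hα1 a hM hc hy
  refine ⟨hb, (((Wk_int hα).const_mul (M ^ 2)).const_mul (Real.exp (c * t))).mono' ?_ ?_⟩
  · apply Continuous.aestronglyMeasurable
    apply Continuous.smul (by fun_prop)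
    rw [continuous_iff_continuousAt]
    intro y
    have := (Gk_diff hα hα1 a hspec (s := c + y * Complex.I) (by simpa using hc)).continuousAt
    exact ContinuousAt.comp (f := fun y : ℝ => (c + y * Complex.I : ℂ)) this (by fun_prop)
  · have : ∀ᵐ y : ℝ, y ≠ 0 := by simp [ae_iff, measure_singleton]
    filter_upwards [this] with y hy using hb y hy

theorem line_shift {𝔸 : Type*} [NormedRing 𝔸] [NormedAlgebra ℂ 𝔸] [CompleteSpace 𝔸] {α : ℝ} (hα : 0 < α) (hα1 : α < 1) (a : 𝔸)
    (hspec : ∀ μ ∈ spectrum ℂ a, μ ≠ 0 ∧ α * Real.pi / 2 < |Complex.arg μ|)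
    {M : ℝ} (hM : ∀ s : ℂ, 0 ≤ s.re → ‖resolvent a (s ^ (α : ℂ))‖ * (1 + ‖s‖ ^ α) ≤ M) {c d t : ℝ} (hc : 0 < c) (hcd : c ≤ d) (ht : 0 < t) :
    ∫ y : ℝ, Complex.exp ((c + y * Complex.I) * t) • Gk α a (c + y * Complex.I) =
    ∫ y : ℝ, Complex.exp ((d + y * Complex.I) * t) • Gk α a (d + y * Complex.I) := by
  have hd : 0 < d := hc.trans_le hcd
  set H : ℂ → 𝔸 := fun s => Complex.exp (s * t) • Gk α a s with hH
  have hrect : ∀ T : ℝ, ((∫ x in c..d, H (x + (-T : ℝ) * Complex.I)) - ∫ x in c..d, H (x + T * Complex.I)) +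
      Complex.I • (∫ y in (-T)..T, H (d + y * Complex.I)) - Complex.I • (∫ y in (-T)..T, H (c + y * Complex.I)) = 0 := by
    intro T
    have := Complex.integral_boundary_rect_eq_zero_of_differentiableOn H (⟨c, -T⟩ : ℂ) ⟨d, T⟩ ?_
    · exact this
    · intro s hs
      have h1 : s.re ∈ Set.uIcc c d := hs.1
      rw [Set.uIcc_of_le hcd] at h1
      apply DifferentiableAt.differentiableWithinAt
      have h2 : DifferentiableAt ℂ (fun s : ℂ => Complex.exp (s * t)) s := by fun_prop
      exact h2.smul (Gk_diff hα hα1 a hspec (hc.trans_le h1.1))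
  have hhor : ∀ σ : ℝ, |σ| = 1 → Tendsto (fun T : ℝ => ∫ x in c..d, H (x + (σ * T : ℝ) * Complex.I)) atTop (𝓝 0) := by
    intro σ hσ
    have h1 : Tendsto (fun T : ℝ => Real.exp (d * t) * (M ^ 2 * Wk α T) * |d - c|) atTop (𝓝 (Real.exp (d * t) * (M ^ 2 * 0) * |d - c|)) :=
      (((Wk_tendsto hα hα1).const_mul _).const_mul _).mul_const _
    simp only [mul_zero, zero_mul] at h1
    refine squeeze_zero_norm' ?_ h1
    filter_upwards [eventually_gt_atTop 0] with T hT
    apply intervalIntegral.norm_integral_le_of_norm_le_const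
    intro x hx
    rw [Set.uIoc_of_le hcd] at hx
    have hσ0 : σ ≠ 0 := by rintro rfl; simp at hσ
    have := (line_int hα hα1 a hspec hM (c := x) (t := t) (hc.trans hx.1)).1 (σ * T) (mul_ne_zero hσ0 hT.ne')
    refine this.trans ?_
    have e : Wk α (σ * T) = Wk α T := by rw [Wk, Wk, abs_mul, hσ, one_mul]
    rw [e]
    have : 0 ≤ Wk α T := by unfold Wk; positivity
    have := hx.2
    gcongr
  have hp := hhor 1 (by simp)
  have hn := hhor (-1) (by simp)
  have vd := intervalIntegral_tendsto_integral (line_int hα hα1 a hspec hM (c := d) (t := t) hd).2 tendsto_neg_atTop_atBot tendsto_id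
  have vc := intervalIntegral_tendsto_integral (line_int hα hα1 a hspec hM (c := c) (t := t) hc).2 tendsto_neg_atTop_atBot tendsto_id
  have hall := ((hn.sub hp).add (vd.const_smul Complex.I)).sub (vc.const_smul Complex.I)
  have hz : Tendsto (fun _ : ℝ => (0 : 𝔸)) atTop (𝓝 0) := tendsto_const_nhds
  have := tendsto_nhds_unique (hz.congr fun T => ?_) hall
  · rw [sub_zero, zero_add, ← smul_sub] at this
    have := (smul_eq_zero.1 this.symm).resolve_left Complex.I_ne_zero
    exact (sub_eq_zero.1 this).symm
  · rw [← hrect T]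
    simp [hH]

theorem ML_bdd {𝔸 : Type*} [NormedRing 𝔸] [NormedAlgebra ℂ 𝔸] [CompleteSpace 𝔸] {α : ℝ} (hα : 0 < α) (hα1 : α < 1) (a : 𝔸)
    (hspec : ∀ μ ∈ spectrum ℂ a, μ ≠ 0 ∧ α * Real.pi / 2 < |Complex.arg μ|) :
    ∃ C : ℝ, ∀ t : ℝ, 1 ≤ t → ∃ S : 𝔸, HasSum (fun k : ℕ => (((Real.Gamma (α * k + α))⁻¹ : ℝ) : ℂ) • (((t ^ α : ℝ) : ℂ) • a) ^ k) S ∧ ‖S‖ ≤ C := by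
  obtain ⟨M, hM0, hM⟩ := res_bound hα hα1 a hspec
  refine ⟨(2 * Real.pi)⁻¹ * (Real.exp 1 * (M ^ 2 * ∫ y, Wk α y)), fun t ht => ?_⟩
  have ht0 : 0 < t := by linarith
  set d := max 1 ((‖a‖ + 1) ^ (1 / α)) with hd
  have hd1 : 1 ≤ d := le_max_left _ _
  have hd0 : 0 < d := by linarith
  have had : ‖a‖ < d ^ α := by
    have h1 : ((‖a‖ + 1) ^ (1 / α)) ^ α ≤ d ^ α := Real.rpow_le_rpow (by positivity) (le_max_right _ _) hα.le
    rw [← Real.rpow_mul (by positivity), one_div, inv_mul_cancel₀ hα.ne', Real.rpow_one] at h1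
    linarith
  have hti : 0 < t⁻¹ := by positivity
  have htd : t⁻¹ ≤ d := (inv_le_one_of_one_le₀ ht).trans hd1
  have hs := line_hasSum hα a hd0 ht0 had
  rw [← line_shift hα hα1 a hspec hM hti htd ht0] at hs
  obtain ⟨hb, hi⟩ := line_int hα hα1 a hspec hM (c := t⁻¹) (t := t) hti
  set I := ∫ y : ℝ, Complex.exp (((t⁻¹ : ℝ) + y * Complex.I) * t) • Gk α a ((t⁻¹ : ℝ) + y * Complex.I) with hI
  have hIb : ‖I‖ ≤ Real.exp 1 * (M ^ 2 * ∫ y, Wk α y) := by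
    rw [← integral_const_mul, ← integral_const_mul]
    apply norm_integral_le_of_norm_le (((Wk_int hα).const_mul (M ^ 2)).const_mul (Real.exp 1))
    have : ∀ᵐ y : ℝ, y ≠ 0 := by simp [ae_iff, measure_singleton]
    filter_upwards [this] with y hy
    have := hb y hy
    rwa [inv_mul_cancel₀ ht0.ne'] at this
  have hs2 := hs.const_smul (((2 * Real.pi * t ^ α)⁻¹ : ℝ) : ℂ)
  refine ⟨(((2 * Real.pi * t ^ α)⁻¹ : ℝ) : ℂ) • I, ?_, ?_⟩
  · convert! hs2 using 1
    ext k
    rw [smul_pow, smul_smul, smul_smul]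
    congr 1
    rw [← Complex.ofReal_pow, ← Complex.ofReal_mul, ← Complex.ofReal_mul]
    congr 1
    have hpi := Real.pi_pos
    rw [Real.rpow_add ht0, Real.rpow_mul_natCast ht0.le]
    have : 0 < t ^ α := by positivity
    field_simp
  · rw [norm_smul, Complex.norm_of_nonneg (by positivity)]
    have : 1 ≤ t ^ α := Real.one_le_rpow ht hα.le
    have hpi := Real.pi_pos
    apply mul_le_mul _ hIb (norm_nonneg _) (by positivity)
    apply inv_anti₀ (by positivity)
    nlinarith

theorem gsum {α : ℝ} (hα : 0 < α) (R : ℝ) (hR : 0 ≤ R) :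
    Summable fun k : ℕ => (Real.Gamma (α * k + α))⁻¹ * R ^ k := by
  set d := (R + 1) ^ (1 / α) with hd
  have had : ‖(R : ℂ)‖ < d ^ α := by
    rw [Complex.norm_of_nonneg hR, hd, ← Real.rpow_mul (by positivity), one_div, inv_mul_cancel₀ hα.ne', Real.rpow_one]
    linarith
  have h := (line_hasSum hα (R : ℂ) (c := d) (t := 1) (by positivity) one_pos had).summable
  have h2 := (h.norm).mul_left (2 * Real.pi)⁻¹
  refine h2.congr fun k => ?_
  have hpi := Real.pi_pos
  have hG := Real.Gamma_pos_of_pos (show 0 < α * k + α by positivity)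
  rw [norm_smul, Complex.norm_of_nonneg (by positivity), norm_pow, Complex.norm_of_nonneg hR, Real.one_rpow]
  field_simp

theorem gen_bound {𝔸 : Type*} [NormedRing 𝔸] [NormedAlgebra ℝ 𝔸] {α : ℝ} (hα : 0 < α) (R : ℝ) (B : 𝔸) (hB : ‖B‖ ≤ R) (k : ℕ) :
    ‖(Real.Gamma (α * k + α))⁻¹ • B ^ k‖ ≤ (1 + ‖(1:𝔸)‖) * ((Real.Gamma (α * k + α))⁻¹ * R ^ k) := by
  have hG := Real.Gamma_pos_of_pos (show 0 < α * k + α by positivity)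
  have h1 : ‖B ^ k‖ ≤ (1 + ‖(1:𝔸)‖) * R ^ k := by
    have hR := (norm_nonneg B).trans hB
    rcases Nat.eq_zero_or_pos k with rfl | hk
    · simp
    · refine (norm_pow_le' B hk).trans ?_
      have := norm_nonneg (1:𝔸)
      have := pow_nonneg hR k
      have := pow_le_pow_left₀ (norm_nonneg B) hB k
      nlinarith
  rw [norm_smul, Real.norm_of_nonneg (by positivity), mul_left_comm]
  gcongr

theorem gen_summable {𝔸 : Type*} [NormedRing 𝔸] [NormedAlgebra ℝ 𝔸] [CompleteSpace 𝔸] {α : ℝ} (hα : 0 < α) (B : 𝔸) :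
    Summable fun k : ℕ => (Real.Gamma (α * k + α))⁻¹ • B ^ k :=
  Summable.of_norm_bounded ((gsum hα ‖B‖ (norm_nonneg _)).mul_left (1 + ‖(1:𝔸)‖)) (gen_bound hα _ B le_rfl)

theorem gen_cont {𝔸 : Type*} [NormedRing 𝔸] [NormedAlgebra ℝ 𝔸] [CompleteSpace 𝔸] {α : ℝ} (hα : 0 < α) :
    Continuous fun B : 𝔸 => ∑' k : ℕ, (Real.Gamma (α * k + α))⁻¹ • B ^ k := by
  rw [continuous_iff_continuousAt]
  intro B
  have : ContinuousOn (fun B : 𝔸 => ∑' k : ℕ, (Real.Gamma (α * k + α))⁻¹ • B ^ k) (Metric.ball 0 (‖B‖ + 1)) := by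
    refine continuousOn_tsum (u := fun k : ℕ => (1 + ‖(1:𝔸)‖) * ((Real.Gamma (α * k + α))⁻¹ * (‖B‖ + 1) ^ k)) (fun k => by fun_prop) ((gsum hα _ (by positivity)).mul_left _) ?_
    intro k x hx
    apply gen_bound hα
    simpa using (Metric.mem_ball.1 hx).le
  exact this.continuousAt (Metric.isOpen_ball.mem_nhds (by simp))

section
attribute [local instance] Matrix.linftyOpNormedAlgebra

theorem ML_cont {s : ℕ} {α : ℝ} (hα : 0 < α) : Continuous (fun B : Matrix (Fin s) (Fin s) ℝ => ML α α B) := by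
  have : CompleteSpace (Matrix (Fin s) (Fin s) ℝ) := FiniteDimensional.complete ℝ _
  exact gen_cont (𝔸 := Matrix (Fin s) (Fin s) ℝ) hα

theorem ML_hasSum {s : ℕ} {α : ℝ} (hα : 0 < α) (B : Matrix (Fin s) (Fin s) ℝ) :
    HasSum (fun k : ℕ => (Real.Gamma (α * k + α))⁻¹ • B ^ k) (ML α α B) := by
  have : CompleteSpace (Matrix (Fin s) (Fin s) ℝ) := FiniteDimensional.complete ℝ _
  exact (gen_summable (𝔸 := Matrix (Fin s) (Fin s) ℝ) hα B).hasSum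

theorem mat_norm_map {s : ℕ} (B : Matrix (Fin s) (Fin s) ℝ) : ‖B.map (algebraMap ℝ ℂ)‖ = ‖B‖ := by
  simp [Matrix.linfty_opNorm_def]

theorem mat_norm_cont {s : ℕ} : Continuous (fun B : Matrix (Fin s) (Fin s) ℝ => ‖B‖) :=
  @continuous_norm (Matrix (Fin s) (Fin s) ℝ) _

theorem K_bdd {s : ℕ} {α : ℝ} (hα : 0 < α) (hα1 : α < 1) (A : Matrix (Fin s) (Fin s) ℝ)
    (hspec : ∀ μ ∈ spectrum ℂ (A.map (algebraMap ℝ ℂ)),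
      μ ≠ 0 ∧ α * Real.pi / 2 < |Complex.arg μ|) :
    ∃ C : ℝ, ∀ t : ℝ, 0 ≤ t → ‖ML α α (t ^ α • A)‖ ≤ C := by
  have hc : CompleteSpace (Matrix (Fin s) (Fin s) ℂ) := FiniteDimensional.complete ℂ _
  obtain ⟨C, hC⟩ := ML_bdd hα hα1 (A.map (algebraMap ℝ ℂ)) hspec
  have hcont : Continuous fun t : ℝ => ‖ML α α (t ^ α • A)‖ := by
    apply mat_norm_cont.comp
    apply (ML_cont hα).comp
    apply Continuous.smul (Real.continuous_rpow_const hα.le) continuous_const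
  obtain ⟨D, hD⟩ := isCompact_Icc.exists_bound_of_continuousOn (s := Set.Icc (0:ℝ) 1) hcont.continuousOn
  refine ⟨max C D, fun t ht => ?_⟩
  rcases le_total t 1 with h1 | h1
  · have := hD t ⟨ht, h1⟩
    rw [norm_norm] at this
    exact this.trans (le_max_right _ _)
  · obtain ⟨S, hS, hSC⟩ := hC t h1
    refine le_trans ?_ (le_max_left _ _)
    have h2 := (ML_hasSum hα (t ^ α • A)).map ((algebraMap ℝ ℂ).mapMatrix (m := Fin s)) (by
      exact Continuous.matrix_map continuous_id Complex.continuous_ofReal)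
    have h3 : (fun k : ℕ => (((Real.Gamma (α * k + α))⁻¹ : ℝ) : ℂ) • (((t ^ α : ℝ) : ℂ) • (A.map (algebraMap ℝ ℂ))) ^ k) =
       ((algebraMap ℝ ℂ).mapMatrix (m := Fin s)) ∘ (fun k : ℕ => (Real.Gamma (α * k + α))⁻¹ • (t ^ α • A) ^ k) := by
      ext1 k
      have e : ∀ (r : ℝ) (B : Matrix (Fin s) (Fin s) ℝ), (algebraMap ℝ ℂ).mapMatrix (r • B) = (r : ℂ) • (algebraMap ℝ ℂ).mapMatrix B := by
        intro r B; ext i j; simp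
      simp only [Function.comp]
      rw [e, map_pow, e]
      rfl
    rw [h3] at hS
    have h4 := hS.unique h2
    rw [h4, RingHom.mapMatrix_apply, mat_norm_map] at hSC
    exact hSC
end

theorem w_int {α : ℝ} (hα : 0 < α) :
    IntervalIntegrable (fun σ : ℝ => (1 - σ) ^ (α - 1) * σ ^ (α - 1)) volume 0 1 := by
  have h := (Complex.betaIntegral_convergent (u := (α : ℂ)) (v := (α : ℂ)) (by simpa) (by simpa)).norm
  refine h.congr_uIoo ?_
  intro x hx
  rw [Set.uIoo_of_le zero_le_one] at hx
  have h1 : (0:ℝ) < 1 - x := by linarith [hx.2]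
  simp only [norm_mul]
  have e1 : ((α : ℂ) - 1) = ((α - 1 : ℝ) : ℂ) := by push_cast; ring
  have e2 : (1 - (x:ℂ)) = ((1 - x : ℝ) : ℂ) := by push_cast; ring
  rw [e1, e2, Complex.norm_cpow_eq_rpow_re_of_pos hx.1, Complex.norm_cpow_eq_rpow_re_of_pos h1, Complex.ofReal_re, mul_comm]

theorem w1_int {α : ℝ} (hα : 0 < α) :
    IntervalIntegrable (fun σ : ℝ => (1 - σ) ^ (α - 1)) volume 0 1 := by
  have h := (intervalIntegral.intervalIntegrable_rpow' (a := 1) (b := 0) (r := α - 1) (by linarith)).comp_sub_left 1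
  simpa using h

theorem sub1 {E : Type*} [NormedAddCommGroup E] [NormedSpace ℝ E] {α : ℝ} (f : ℝ → E) {t : ℝ} (ht : 0 < t) :
    (t ^ (1 - α)) • ∫ τ in (0:ℝ)..t, ((t - τ) ^ (α - 1) * τ ^ (α - 1)) • f τ =
    t ^ α • ∫ σ in (0:ℝ)..1, ((1 - σ) ^ (α - 1) * σ ^ (α - 1)) • f (t * σ) := by
  have h := intervalIntegral.smul_integral_comp_mul_left (a := 0) (b := 1) (fun τ => ((t - τ) ^ (α - 1) * τ ^ (α - 1)) • f τ) t
  rw [mul_zero, mul_one] at h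
  rw [← h]
  have h2 : ∫ x in (0:ℝ)..1, ((t - t * x) ^ (α - 1) * (t * x) ^ (α - 1)) • f (t * x) =
      ∫ x in (0:ℝ)..1, (t ^ (α - 1) * t ^ (α - 1)) • (((1 - x) ^ (α - 1) * x ^ (α - 1)) • f (t * x)) := by
    apply intervalIntegral.integral_congr
    intro x hx
    rw [Set.uIcc_of_le zero_le_one] at hx
    have h1 : (0:ℝ) ≤ 1 - x := by linarith [hx.2]
    simp only
    rw [smul_smul, show t - t * x = t * (1 - x) by ring, Real.mul_rpow ht.le h1, Real.mul_rpow ht.le hx.1]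
    congr 1; ring
  rw [h2, intervalIntegral.integral_smul, smul_smul, smul_smul]
  congr 1
  nth_rewrite 2 [← Real.rpow_one t]
  simp only [← Real.rpow_add ht]
  congr 1; ring

theorem sub2 {E : Type*} [NormedAddCommGroup E] [NormedSpace ℝ E] {α : ℝ} (f : ℝ → E) {t : ℝ} (ht : 0 < t) :
    (t ^ (1 - α)) • ∫ τ in (0:ℝ)..t, ((t - τ) ^ (α - 1)) • f τ =
    t • ∫ σ in (0:ℝ)..1, ((1 - σ) ^ (α - 1)) • f (t * σ) := by
  have h := intervalIntegral.smul_integral_comp_mul_left (a := 0) (b := 1) (fun τ => ((t - τ) ^ (α - 1)) • f τ) t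
  rw [mul_zero, mul_one] at h
  rw [← h]
  have h2 : ∫ x in (0:ℝ)..1, ((t - t * x) ^ (α - 1)) • f (t * x) =
      ∫ x in (0:ℝ)..1, (t ^ (α - 1)) • (((1 - x) ^ (α - 1)) • f (t * x)) := by
    apply intervalIntegral.integral_congr
    intro x hx
    rw [Set.uIcc_of_le zero_le_one] at hx
    have h1 : (0:ℝ) ≤ 1 - x := by linarith [hx.2]
    simp only
    rw [smul_smul, show t - t * x = t * (1 - x) by ring, Real.mul_rpow ht.le h1]
  rw [h2, intervalIntegral.integral_smul, smul_smul, smul_smul]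
  congr 1
  nth_rewrite 2 [← Real.rpow_one t]
  nth_rewrite 4 [← Real.rpow_one t]
  simp only [← Real.rpow_add ht]
  congr 1; ring

theorem cont_par {E : Type*} [NormedAddCommGroup E] [NormedSpace ℝ E] {k : ℝ → ℝ}
    (hk : IntervalIntegrable k volume 0 1) (f : ℝ → ℝ → E) (hf : Continuous fun p : ℝ × ℝ => f p.1 p.2) :
    Continuous fun t => ∫ σ in (0:ℝ)..1, k σ • f t σ := by
  rw [continuous_iff_continuousAt]
  intro t0
  obtain ⟨C, hC⟩ := ((isCompact_Icc (a := t0 - 1) (b := t0 + 1)).prod (isCompact_Icc (a := (0:ℝ)) (b := 1))).exists_bound_of_continuousOn hf.continuousOn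
  refine intervalIntegral.continuousAt_of_dominated_interval (bound := fun σ => ‖k σ‖ * C) ?_ ?_ (hk.norm.mul_const C) ?_
  · refine Eventually.of_forall fun t => ?_
    have : IntervalIntegrable (fun σ => k σ • f t σ) volume 0 1 :=
      hk.smul_continuousOn (by fun_prop)
    rw [Set.uIoc_of_le zero_le_one]
    exact this.1.aestronglyMeasurable
  · filter_upwards [Icc_mem_nhds (show t0 - 1 < t0 by linarith) (show t0 < t0 + 1 by linarith)] with t ht
    refine Eventually.of_forall fun σ hσ => ?_
    rw [Set.uIoc_of_le zero_le_one] at hσ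
    rw [norm_smul]
    gcongr
    exact hC (t, σ) ⟨ht, hσ.1.le, hσ.2⟩
  · refine Eventually.of_forall fun σ hσ => ?_
    have : Continuous fun t => k σ • f t σ := by fun_prop
    exact this.continuousAt

noncomputable def Jq {s : ℕ} (α : ℝ) (K Q : ℝ → Matrix (Fin s) (Fin s) ℝ) (y : ℝ → Fin s → ℝ) (t : ℝ) : Fin s → ℝ :=
  ∫ σ in (0:ℝ)..1, ((1 - σ) ^ (α - 1) * σ ^ (α - 1)) • (K (t - t * σ) * Q (t * σ)).mulVec (y (t * σ))

noncomputable def Jg {s : ℕ} (α : ℝ) (K : ℝ → Matrix (Fin s) (Fin s) ℝ) (g : ℝ → Fin s → ℝ) (t : ℝ) : Fin s → ℝ :=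
  ∫ σ in (0:ℝ)..1, ((1 - σ) ^ (α - 1)) • (K (t - t * σ)).mulVec (g (t * σ))

theorem Jq_cont {s : ℕ} {α : ℝ} (hα : 0 < α) {K Q : ℝ → Matrix (Fin s) (Fin s) ℝ} {y : ℝ → Fin s → ℝ}
    (hK : Continuous K) (hQ : Continuous Q) (hy : Continuous y) : Continuous (Jq α K Q y) := by
  apply cont_par (w_int hα) (fun t σ => (K (t - t * σ) * Q (t * σ)).mulVec (y (t * σ)))
  apply Continuous.matrix_mulVec
  · apply Continuous.matrix_mul
    · exact hK.comp (by fun_prop)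
    · exact hQ.comp (by fun_prop)
  · fun_prop

theorem Jg_cont {s : ℕ} {α : ℝ} (hα : 0 < α) {K : ℝ → Matrix (Fin s) (Fin s) ℝ} {g : ℝ → Fin s → ℝ}
    (hK : Continuous K) (hg : Continuous g) : Continuous (Jg α K g) := by
  apply cont_par (w1_int hα) (fun t σ => (K (t - t * σ)).mulVec (g (t * σ)))
  apply Continuous.matrix_mulVec
  · exact hK.comp (by fun_prop)
  · fun_prop

theorem Jq_bound {s : ℕ} {α : ℝ} (hα : 0 < α) {K Q : ℝ → Matrix (Fin s) (Fin s) ℝ} {y : ℝ → Fin s → ℝ}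
    (hK : Continuous K) (hQ : Continuous Q) {D q t : ℝ} (hD : ∀ τ, ‖y τ‖ ≤ D) (ht : 0 < t)
    (hq : t ^ (1 - α) * ∫ τ in (0:ℝ)..t, (t - τ) ^ (α - 1) * ‖K (t - τ) * Q τ‖ * τ ^ (α - 1) ≤ q) :
    ‖t ^ α • Jq α K Q y t‖ ≤ q * D := by
  have hD0 : 0 ≤ D := (norm_nonneg _).trans (hD 0)
  have h1 := sub1 (α := α) (fun τ => ‖K (t - τ) * Q τ‖) ht
  have h2 : t ^ α * ∫ σ in (0:ℝ)..1, ((1 - σ) ^ (α - 1) * σ ^ (α - 1)) * ‖K (t - t * σ) * Q (t * σ)‖ ≤ q := by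
    simp only [smul_eq_mul] at h1
    rw [← h1]
    convert hq using 4
    ring
  have hc : Continuous fun σ => ‖K (t - t * σ) * Q (t * σ)‖ := by
    apply mat_norm_cont.comp
    apply Continuous.matrix_mul
    · exact hK.comp (by fun_prop)
    · exact hQ.comp (by fun_prop)
  have hi : IntervalIntegrable (fun σ => ((1 - σ) ^ (α - 1) * σ ^ (α - 1)) * ‖K (t - t * σ) * Q (t * σ)‖) volume 0 1 :=
    (w_int hα).mul_continuousOn hc.continuousOn
  have h3 : ‖Jq α K Q y t‖ ≤ ∫ σ in (0:ℝ)..1, ((1 - σ) ^ (α - 1) * σ ^ (α - 1)) * ‖K (t - t * σ) * Q (t * σ)‖ * D := by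
    apply intervalIntegral.norm_integral_le_of_norm_le zero_le_one _ (hi.mul_const D)
    refine Eventually.of_forall fun σ hσ => ?_
    have h5 : 0 ≤ 1 - σ := by linarith [hσ.2]
    rw [norm_smul, Real.norm_of_nonneg (mul_nonneg (Real.rpow_nonneg h5 _) (Real.rpow_nonneg hσ.1.le _)), mul_assoc _ _ D]
    refine mul_le_mul_of_nonneg_left ?_ (mul_nonneg (Real.rpow_nonneg h5 _) (Real.rpow_nonneg hσ.1.le _))
    refine (Matrix.linfty_opNorm_mulVec _ _).trans ?_
    exact mul_le_mul_of_nonneg_left (hD _) (norm_nonneg _)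
  rw [intervalIntegral.integral_mul_const] at h3
  rw [norm_smul, Real.norm_of_nonneg (by positivity)]
  calc _ ≤ t ^ α * ((∫ σ in (0:ℝ)..1, ((1 - σ) ^ (α - 1) * σ ^ (α - 1)) * ‖K (t - t * σ) * Q (t * σ)‖) * D) := by gcongr
    _ ≤ _ := by rw [← mul_assoc]; gcongr

theorem Jg_bound {s : ℕ} {α : ℝ} (hα : 0 < α) {K : ℝ → Matrix (Fin s) (Fin s) ℝ} {g : ℝ → Fin s → ℝ}
    (hK : Continuous K) (hg : Continuous g) {C t : ℝ} (ht : 0 < t)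
    (hq : t ^ (1 - α) * ∫ τ in (0:ℝ)..t, (t - τ) ^ (α - 1) * ‖(K (t - τ)).mulVec (g τ)‖ ≤ C) :
    ‖t • Jg α K g t‖ ≤ C := by
  have h1 := sub2 (α := α) (fun τ => ‖(K (t - τ)).mulVec (g τ)‖) ht
  simp only [smul_eq_mul] at h1
  rw [h1] at hq
  have hc : Continuous fun σ => ‖(K (t - t * σ)).mulVec (g (t * σ))‖ := by
    apply continuous_norm.comp
    apply Continuous.matrix_mulVec
    · exact hK.comp (by fun_prop)
    · fun_prop
  have h3 : ‖Jg α K g t‖ ≤ ∫ σ in (0:ℝ)..1, ((1 - σ) ^ (α - 1)) * ‖(K (t - t * σ)).mulVec (g (t * σ))‖ := by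
    apply intervalIntegral.norm_integral_le_of_norm_le zero_le_one _ ((w1_int hα).mul_continuousOn hc.continuousOn)
    refine Eventually.of_forall fun σ hσ => ?_
    have h5 : 0 ≤ 1 - σ := by linarith [hσ.2]
    rw [norm_smul, Real.norm_of_nonneg (Real.rpow_nonneg h5 _)]
  rw [norm_smul, Real.norm_of_nonneg ht.le]
  refine le_trans ?_ hq
  gcongr

/-- relation between equation for phi and for y -/
theorem eq_conv {s : ℕ} {α : ℝ} {K Q : ℝ → Matrix (Fin s) (Fin s) ℝ} {y φ g : ℝ → Fin s → ℝ} (x₀ : Fin s → ℝ)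
    (h : ∀ t > (0:ℝ), y t = t ^ (1 - α) • φ t) {t : ℝ} (ht : 0 < t) :
    φ t = t ^ (α - 1) • (K t).mulVec x₀
          + (∫ τ in (0:ℝ)..t, (t - τ) ^ (α - 1) • (K (t - τ) * Q τ).mulVec (φ τ))
          + (∫ τ in (0:ℝ)..t, (t - τ) ^ (α - 1) • (K (t - τ)).mulVec (g τ)) ↔
    y t = (K t).mulVec x₀ + t ^ α • Jq α K Q y t + t • Jg α K g t := by
  have hr : ∀ t : ℝ, 0 < t → t ^ (1 - α) * t ^ (α - 1) = 1 := fun t ht => by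
    rw [← Real.rpow_add ht]; simp
  have h0 : t ^ (1 - α) ≠ 0 := (Real.rpow_pos_of_pos ht _).ne'
  have e1 : (∫ τ in (0:ℝ)..t, (t - τ) ^ (α - 1) • (K (t - τ) * Q τ).mulVec (φ τ)) =
      ∫ τ in (0:ℝ)..t, ((t - τ) ^ (α - 1) * τ ^ (α - 1)) • (K (t - τ) * Q τ).mulVec (y τ) := by
    apply intervalIntegral.integral_congr_ae
    refine Eventually.of_forall fun τ hτ => ?_
    rw [Set.uIoc_of_le ht.le] at hτ
    rw [h τ hτ.1, Matrix.mulVec_smul, smul_smul, mul_assoc, mul_comm (τ ^ (α - 1)), hr τ hτ.1, mul_one]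
  have e2 := sub1 (α := α) (fun τ => (K (t - τ) * Q τ).mulVec (y τ)) ht
  have e3 := sub2 (α := α) (fun τ => (K (t - τ)).mulVec (g τ)) ht
  rw [e1, Jq, Jg, ← e2, ← e3, h t ht, ← smul_right_injective (Fin s → ℝ) h0 |>.eq_iff]
  simp only [smul_add, smul_smul]
  rw [hr t ht, one_smul]

open scoped BoundedContinuousFunction in
theorem fp_y {s : ℕ} {α : ℝ} (hα : 0 < α) (hα1 : α < 1) {K Q : ℝ → Matrix (Fin s) (Fin s) ℝ} {g : ℝ → Fin s → ℝ}
    (hK : Continuous K) (hQ : Continuous Q) (hg : Continuous g) (hKb : ∃ C, ∀ t, 0 ≤ t → ‖K t‖ ≤ C)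
    {q : ℝ} (hq : q < 1)
    (hQint : ∀ t : ℝ, 0 ≤ t →
      t ^ (1 - α) * ∫ τ in (0:ℝ)..t, (t - τ) ^ (α - 1) * ‖K (t - τ) * Q τ‖ * τ ^ (α - 1) ≤ q)
    (hgint : ∃ C : ℝ, ∀ t : ℝ, 0 ≤ t →
      t ^ (1 - α) * ∫ τ in (0:ℝ)..t, (t - τ) ^ (α - 1) * ‖(K (t - τ)).mulVec (g τ)‖ ≤ C)
    (x₀ : Fin s → ℝ) :
    ∃ y : ℝ →ᵇ (Fin s → ℝ), (∀ t > (0:ℝ), y t = (K t).mulVec x₀ + t ^ α • Jq α K Q y t + t • Jg α K g t) ∧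
      ∀ z : ℝ →ᵇ (Fin s → ℝ), (∀ t > (0:ℝ), z t = (K t).mulVec x₀ + t ^ α • Jq α K Q z t + t • Jg α K g t) →
        ∀ t > (0:ℝ), z t = y t := by
  have hq0 : 0 ≤ q := by
    have := hQint 0 le_rfl
    rwa [Real.zero_rpow (by linarith), zero_mul] at this
  obtain ⟨CK, hCK⟩ := hKb
  obtain ⟨Cg, hCg⟩ := hgint
  have hCg0 : 0 ≤ Cg := by
    have := hCg 0 le_rfl
    rwa [Real.zero_rpow (by linarith), zero_mul] at this
  have hbq : ∀ (y : ℝ → Fin s → ℝ) (D : ℝ), (∀ τ, ‖y τ‖ ≤ D) → ∀ t, 0 ≤ t → ‖t ^ α • Jq α K Q y t‖ ≤ q * D := by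
    intro y D hD t ht
    rcases ht.eq_or_lt with rfl | ht
    · rw [Real.zero_rpow hα.ne', zero_smul, norm_zero]
      exact mul_nonneg hq0 ((norm_nonneg _).trans (hD 0))
    · exact Jq_bound hα hK hQ hD ht (hQint t ht.le)
  have hbg : ∀ t, 0 ≤ t → ‖t • Jg α K g t‖ ≤ Cg := by
    intro t ht
    rcases ht.eq_or_lt with rfl | ht
    · simpa using hCg0
    · exact Jg_bound hα hK hg ht (hCg t ht.le)
  let S : (ℝ → Fin s → ℝ) → ℝ → Fin s → ℝ := fun y t => (K t).mulVec x₀ + t ^ α • Jq α K Q y t + t • Jg α K g t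
  have hSc : ∀ y, Continuous y → Continuous (S y) := by
    intro y hy
    refine ((hK.matrix_mulVec continuous_const).add ?_).add ?_
    · exact (Real.continuous_rpow_const hα.le).smul (Jq_cont hα hK hQ hy)
    · exact continuous_id.smul (Jg_cont hα hK hg)
  have hSb : ∀ y D, (∀ τ, ‖y τ‖ ≤ D) → ∀ t, 0 ≤ t → ‖S y t‖ ≤ CK * ‖x₀‖ + q * D + Cg := by
    intro y D hD t ht
    refine (norm_add₃_le).trans ?_
    refine add_le_add (add_le_add ?_ (hbq y D hD t ht)) (hbg t ht)
    refine (Matrix.linfty_opNorm_mulVec _ _).trans ?_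
    exact mul_le_mul_of_nonneg_right (hCK t ht) (norm_nonneg _)
  let T : (ℝ →ᵇ (Fin s → ℝ)) → (ℝ →ᵇ (Fin s → ℝ)) := fun y =>
    BoundedContinuousFunction.ofNormedAddCommGroup (fun t => S y (max t 0))
      ((hSc y y.continuous).comp (continuous_id.max continuous_const)) (CK * ‖x₀‖ + q * ‖y‖ + Cg)
      (fun t => hSb y ‖y‖ y.norm_coe_le_norm _ (le_max_right _ _))
  have hT : ∀ y t, T y t = S y (max t 0) := fun y t => rfl
  have hsub : ∀ (y z : ℝ →ᵇ (Fin s → ℝ)) t, S y t - S z t = t ^ α • Jq α K Q (y - z) t := by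
    intro y z t
    have hi : ∀ y : ℝ →ᵇ (Fin s → ℝ), IntervalIntegrable (fun σ : ℝ => ((1 - σ) ^ (α - 1) * σ ^ (α - 1)) • (K (t - t * σ) * Q (t * σ)).mulVec (y (t * σ))) volume 0 1 := by
      intro y
      apply (w_int hα).smul_continuousOn
      apply Continuous.continuousOn
      apply Continuous.matrix_mulVec
      · apply Continuous.matrix_mul
        · exact hK.comp (by fun_prop)
        · exact hQ.comp (by fun_prop)
      · exact y.continuous.comp (by fun_prop)
    have : Jq α K Q (y - z) t = Jq α K Q y t - Jq α K Q z t := by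
      rw [Jq, Jq, Jq, ← intervalIntegral.integral_sub (hi y) (hi z)]
      apply intervalIntegral.integral_congr
      intro σ _
      simp only [Pi.sub_apply, Matrix.mulVec_sub, smul_sub]
    rw [this, smul_sub]
    simp only [S]
    abel
  have hcon : ContractingWith ⟨q, hq0⟩ T := by
    refine ⟨by exact_mod_cast hq, LipschitzWith.of_dist_le_mul fun y z => ?_⟩
    rw [BoundedContinuousFunction.dist_le (by positivity)]
    intro t
    rw [hT, hT, dist_eq_norm, hsub]
    refine hbq _ _ (fun τ => ?_) _ (le_max_right _ _)
    rw [Pi.sub_apply, ← dist_eq_norm]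
    exact BoundedContinuousFunction.dist_coe_le_dist τ
  refine ⟨hcon.fixedPoint T, fun t ht => ?_, fun z hz t ht => ?_⟩
  · have h := hT (hcon.fixedPoint T) t
    rw [hcon.fixedPoint_isFixedPt] at h
    rw [max_eq_left ht.le] at h
    exact h
  · set y := hcon.fixedPoint T
    have hy : ∀ t > 0, y t = S y t := by
      intro t ht
      have h := hT (hcon.fixedPoint T) t
      rw [hcon.fixedPoint_isFixedPt] at h
      rw [max_eq_left ht.le] at h
      exact h
    -- compare T z with y: T z is a fixed point
    have hTz : ∀ t, 0 ≤ t → T z t = z t := by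
      intro t ht
      have hcl : IsClosed {t | T z t = z t} := isClosed_eq (T z).continuous z.continuous
      have hsub : Set.Ioi (0:ℝ) ⊆ {t | T z t = z t} := by
        intro t ht
        have ht : 0 < t := ht
        simp only [Set.mem_ofPred_eq]
        rw [hT, max_eq_left ht.le]
        exact (hz t ht).symm
      have := hcl.closure_subset_iff.2 hsub
      rw [closure_Ioi] at this
      exact this ht
    have hS : ∀ (u v : ℝ → Fin s → ℝ), (∀ t, 0 ≤ t → u t = v t) → ∀ t, 0 ≤ t → S u t = S v t := by
      intro u v huv t ht
      have : Jq α K Q u t = Jq α K Q v t := by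
        apply intervalIntegral.integral_congr
        intro σ hσ
        rw [Set.uIcc_of_le zero_le_one] at hσ
        simp only
        rw [huv _ (mul_nonneg ht hσ.1)]
      simp only [S, this]
    have hfix : T (T z) = T z := by
      ext1 t
      rw [hT, hT]
      exact hS _ _ hTz _ (le_max_right _ _)
    have h2 := hcon.fixedPoint_unique hfix
    rw [← hTz t ht.le, h2]

theorem ext_z {s : ℕ} {α : ℝ} {ψ : ℝ → Fin s → ℝ} (h : memC0inf α ψ) :
    ∃ z : BoundedContinuousFunction ℝ (Fin s → ℝ), ∀ t > (0:ℝ), z t = t ^ (1 - α) • ψ t := by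
  obtain ⟨hc, ⟨l, hl⟩, ⟨C, hC⟩⟩ := h
  let F : ℝ → Fin s → ℝ := fun t => if 0 < t then t ^ (1 - α) • ψ t else l
  have hFp : ∀ t > 0, F t = t ^ (1 - α) • ψ t := fun t ht => if_pos ht
  have hFn : ∀ t ≤ 0, F t = l := fun t ht => if_neg (not_lt.2 ht)
  have hF : Continuous F := by
    rw [continuous_iff_continuousAt]
    intro t
    rcases lt_trichotomy t 0 with ht | rfl | ht
    · refine (continuousAt_const (y := l)).congr ?_
      filter_upwards [Iio_mem_nhds ht] with u hu
      exact (hFn u (le_of_lt hu)).symm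
    · rw [continuousAt_iff_continuous_left'_right']
      constructor
      · refine (continuousWithinAt_const (b := l)).congr (fun u hu => hFn u (le_of_lt hu)) (hFn 0 le_rfl)
      · rw [ContinuousWithinAt, hFn 0 le_rfl]
        refine hl.congr' ?_
        filter_upwards [self_mem_nhdsWithin] with u hu
        exact (hFp u hu).symm
    · have h1 : ContinuousAt (fun t : ℝ => t ^ (1 - α) • ψ t) t :=
        (Real.continuousAt_rpow_const _ _ (Or.inl ht.ne')).smul (hc.continuousAt (Ioi_mem_nhds ht))
      refine h1.congr ?_
      filter_upwards [Ioi_mem_nhds ht] with u hu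
      exact (hFp u hu).symm
  refine ⟨BoundedContinuousFunction.ofNormedAddCommGroup F hF (max C ‖l‖) fun t => ?_, hFp⟩
  rcases le_or_gt t 0 with ht | ht
  · rw [hFn t ht]; exact le_max_right _ _
  · rw [hFp t ht, norm_smul, Real.norm_of_nonneg (by positivity)]
    exact (hC t ht.le).trans (le_max_left _ _)

theorem fp {s : ℕ} {α : ℝ} (hα : 0 < α) (hα1 : α < 1) {K Q : ℝ → Matrix (Fin s) (Fin s) ℝ} {g : ℝ → Fin s → ℝ}
    (hK : Continuous K) (hQ : Continuous Q) (hg : Continuous g) (hKb : ∃ C, ∀ t, 0 ≤ t → ‖K t‖ ≤ C)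
    {q : ℝ} (hq : q < 1)
    (hQint : ∀ t : ℝ, 0 ≤ t →
      t ^ (1 - α) * ∫ τ in (0:ℝ)..t, (t - τ) ^ (α - 1) * ‖K (t - τ) * Q τ‖ * τ ^ (α - 1) ≤ q)
    (hgint : ∃ C : ℝ, ∀ t : ℝ, 0 ≤ t →
      t ^ (1 - α) * ∫ τ in (0:ℝ)..t, (t - τ) ^ (α - 1) * ‖(K (t - τ)).mulVec (g τ)‖ ≤ C)
    (x₀ : Fin s → ℝ) :
    ∃ φ : ℝ → (Fin s → ℝ),
      memC0inf α φ ∧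
      (∀ t > (0:ℝ),
        φ t = t ^ (α - 1) • (K t).mulVec x₀
          + (∫ τ in (0:ℝ)..t, (t - τ) ^ (α - 1) • (K (t - τ) * Q τ).mulVec (φ τ))
          + ∫ τ in (0:ℝ)..t, (t - τ) ^ (α - 1) • (K (t - τ)).mulVec (g τ)) ∧
      (∀ ψ : ℝ → (Fin s → ℝ), memC0inf α ψ →
        (∀ t > (0:ℝ),
          ψ t = t ^ (α - 1) • (K t).mulVec x₀
            + (∫ τ in (0:ℝ)..t, (t - τ) ^ (α - 1) • (K (t - τ) * Q τ).mulVec (ψ τ))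
            + ∫ τ in (0:ℝ)..t, (t - τ) ^ (α - 1) • (K (t - τ)).mulVec (g τ)) →
        ∀ t > (0:ℝ), ψ t = φ t) ∧
      Tendsto φ atTop (𝓝 0) := by
  obtain ⟨y, hy, hu⟩ := fp_y hα hα1 hK hQ hg hKb hq hQint hgint x₀
  have hr : ∀ t : ℝ, 0 < t → t ^ (1 - α) * t ^ (α - 1) = 1 := fun t ht => by
    rw [← Real.rpow_add ht]; simp
  have hφ : ∀ t > (0:ℝ), y t = t ^ (1 - α) • (t ^ (α - 1) • y t) := by
    intro t ht
    rw [smul_smul, hr t ht, one_smul]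
  refine ⟨fun t => t ^ (α - 1) • y t, ⟨?_, ⟨y 0, ?_⟩, ⟨‖y‖, ?_⟩⟩, ?_, ?_, ?_⟩
  · intro t ht
    exact ((Real.continuousAt_rpow_const _ _ (Or.inl (ne_of_gt ht))).smul y.continuous.continuousAt).continuousWithinAt
  · have h1 : Tendsto y (𝓝[>] 0) (𝓝 (y 0)) := y.continuous.continuousAt.mono_left nhdsWithin_le_nhds
    refine h1.congr' ?_
    filter_upwards [self_mem_nhdsWithin] with t ht
    exact hφ t ht
  · intro t ht
    rcases ht.eq_or_lt with rfl | ht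
    · rw [Real.zero_rpow (by linarith), zero_mul]; exact norm_nonneg _
    · rw [norm_smul, Real.norm_of_nonneg (by positivity), ← mul_assoc, hr t ht, one_mul]
      exact y.norm_coe_le_norm t
  · intro t ht
    exact (eq_conv x₀ hφ ht).2 (hy t ht)
  · intro ψ hψ he t ht
    obtain ⟨z, hz⟩ := ext_z hψ
    have h1 := hu z (fun t ht => (eq_conv x₀ hz ht).1 (he t ht)) t ht
    have h2 : t ^ (α - 1) • z t = ψ t := by
      rw [hz t ht, smul_smul, mul_comm, hr t ht, one_smul]
    rw [← h2, h1]
  · have h1 : Tendsto (fun t : ℝ => t ^ (α - 1) * ‖y‖) atTop (𝓝 0) := by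
      have := (tendsto_rpow_neg_atTop (y := 1 - α) (by linarith)).mul_const ‖y‖
      simpa using this
    refine squeeze_zero_norm' ?_ h1
    filter_upwards [eventually_gt_atTop 0] with t ht
    rw [norm_smul, Real.norm_of_nonneg (by positivity)]
    exact mul_le_mul_of_nonneg_left (y.norm_coe_le_norm t) (by positivity)

theorem stmt10 (α : ℝ) (hα0 : 0 < α) (hα1 : α < 1) (s : ℕ)
    (A : Matrix (Fin s) (Fin s) ℝ)
    (hspec : ∀ μ ∈ spectrum ℂ (A.map (algebraMap ℝ ℂ)),
      μ ≠ 0 ∧ α * Real.pi / 2 < |Complex.arg μ|)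
    (Q : ℝ → Matrix (Fin s) (Fin s) ℝ) (hQc : ContinuousOn Q (Set.Ici 0))
    (q : ℝ) (hq : q < 1)
    (hQint : ∀ t : ℝ, 0 ≤ t →
      t ^ (1 - α) * ∫ τ in (0:ℝ)..t,
        (t - τ) ^ (α - 1) * ‖ML α α ((t - τ) ^ α • A) * Q τ‖ * τ ^ (α - 1) ≤ q)
    (g : ℝ → (Fin s → ℝ)) (hgc : ContinuousOn g (Set.Ici 0))
    (hgint : ∃ C : ℝ, ∀ t : ℝ, 0 ≤ t →
      t ^ (1 - α) * ∫ τ in (0:ℝ)..t,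
        (t - τ) ^ (α - 1) * ‖(ML α α ((t - τ) ^ α • A)).mulVec (g τ)‖ ≤ C) :
    ∀ x₀ : Fin s → ℝ, ∃ φ : ℝ → (Fin s → ℝ),
      memC0inf α φ ∧
      (∀ t > (0:ℝ),
        φ t = t ^ (α - 1) • (ML α α (t ^ α • A)).mulVec x₀
          + (∫ τ in (0:ℝ)..t, (t - τ) ^ (α - 1) •
              (ML α α ((t - τ) ^ α • A) * Q τ).mulVec (φ τ))
          + ∫ τ in (0:ℝ)..t, (t - τ) ^ (α - 1) •
              (ML α α ((t - τ) ^ α • A)).mulVec (g τ)) ∧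
      (∀ ψ : ℝ → (Fin s → ℝ), memC0inf α ψ →
        (∀ t > (0:ℝ),
          ψ t = t ^ (α - 1) • (ML α α (t ^ α • A)).mulVec x₀
            + (∫ τ in (0:ℝ)..t, (t - τ) ^ (α - 1) •
                (ML α α ((t - τ) ^ α • A) * Q τ).mulVec (ψ τ))
            + ∫ τ in (0:ℝ)..t, (t - τ) ^ (α - 1) •
                (ML α α ((t - τ) ^ α • A)).mulVec (g τ)) →
        ∀ t > (0:ℝ), ψ t = φ t) ∧
      Tendsto φ atTop (𝓝 0) := by
  intro x₀
  have hK : Continuous fun t : ℝ => ML α α (t ^ α • A) :=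
    (ML_cont hα0).comp (Continuous.smul (Real.continuous_rpow_const hα0.le) continuous_const)
  have hmax : Continuous fun t : ℝ => max t 0 := continuous_id.max continuous_const
  have hQ' : Continuous fun t : ℝ => Q (max t 0) :=
    hQc.comp_continuous hmax fun t => Set.mem_Ici.2 (le_max_right _ _)
  have hg' : Continuous fun t : ℝ => g (max t 0) :=
    hgc.comp_continuous hmax fun t => Set.mem_Ici.2 (le_max_right _ _)
  have eQ : ∀ (t : ℝ), 0 ≤ t → (∫ τ in (0:ℝ)..t,
        (t - τ) ^ (α - 1) * ‖ML α α ((t - τ) ^ α • A) * Q (max τ 0)‖ * τ ^ (α - 1)) = ∫ τ in (0:ℝ)..t,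
        (t - τ) ^ (α - 1) * ‖ML α α ((t - τ) ^ α • A) * Q τ‖ * τ ^ (α - 1) := by
    intro t ht
    apply intervalIntegral.integral_congr
    intro τ hτ
    rw [Set.uIcc_of_le ht] at hτ
    simp only
    rw [max_eq_left hτ.1]
  have eg : ∀ (t : ℝ), 0 ≤ t → (∫ τ in (0:ℝ)..t,
        (t - τ) ^ (α - 1) * ‖(ML α α ((t - τ) ^ α • A)).mulVec (g (max τ 0))‖) = ∫ τ in (0:ℝ)..t,
        (t - τ) ^ (α - 1) * ‖(ML α α ((t - τ) ^ α • A)).mulVec (g τ)‖ := by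
    intro t ht
    apply intervalIntegral.integral_congr
    intro τ hτ
    rw [Set.uIcc_of_le ht] at hτ
    simp only
    rw [max_eq_left hτ.1]
  have eQ2 : ∀ (u : ℝ → Fin s → ℝ) (t : ℝ), 0 < t → (∫ τ in (0:ℝ)..t, (t - τ) ^ (α - 1) •
              (ML α α ((t - τ) ^ α • A) * Q (max τ 0)).mulVec (u τ)) = ∫ τ in (0:ℝ)..t, (t - τ) ^ (α - 1) •
              (ML α α ((t - τ) ^ α • A) * Q τ).mulVec (u τ) := by
    intro u t ht
    apply intervalIntegral.integral_congr
    intro τ hτ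
    rw [Set.uIcc_of_le ht.le] at hτ
    simp only
    rw [max_eq_left hτ.1]
  have eg2 : ∀ (t : ℝ), 0 < t → (∫ τ in (0:ℝ)..t, (t - τ) ^ (α - 1) •
              (ML α α ((t - τ) ^ α • A)).mulVec (g (max τ 0))) = ∫ τ in (0:ℝ)..t, (t - τ) ^ (α - 1) •
              (ML α α ((t - τ) ^ α • A)).mulVec (g τ) := by
    intro t ht
    apply intervalIntegral.integral_congr
    intro τ hτ
    rw [Set.uIcc_of_le ht.le] at hτ
    simp only
    rw [max_eq_left hτ.1]
  obtain ⟨Cg, hCg⟩ := hgint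
  obtain ⟨φ, h1, h2, h3, h4⟩ := fp hα0 hα1 hK hQ' hg' (K_bdd hα0 hα1 A hspec) hq
    (fun t ht => by rw [eQ t ht]; exact hQint t ht)
    ⟨Cg, fun t ht => by rw [eg t ht]; exact hCg t ht⟩ x₀
  refine ⟨φ, h1, fun t ht => ?_, fun ψ hψ he t ht => h3 ψ hψ (fun t ht => ?_) t ht, h4⟩
  · rw [← eQ2 φ t ht, ← eg2 t ht]; exact h2 t ht
  · rw [eQ2 ψ t ht, eg2 t ht]; exact he t ht
end

section
/- Let 0 < α < 1, let A be a real s×s matrix all of whose (complex) eigenvalues λ satisfy λ ≠ 0 and |arg λ| > απ/2, let Q : [0,∞) → ℝ^{s×s} be continuous with sup_{t≥0} ‖Q(t)‖ < 1 / ( sup_{t≥0} t^{1-α} ∫₀^t (t-τ)^{α-1} ‖E_{α,α}((t-τ)^α A)‖ τ^{α-1} dτ ), and let g : [0,∞) → ℝ^s be continuous with sup_{t≥0} t^{1-α} ∫₀^t (t-τ)^{α-1} ‖E_{α,α}((t-τ)^α A) g(τ)‖ dτ < ∞. Then for every x₀ ∈ ℝ^s the unique solution φ of the integral equation φ(t)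 = t^{α-1} E_{α,α}(t^α A) x₀ + ∫₀^t (t-τ)^{α-1} E_{α,α}((t-τ)^α A) Q(τ) φ(τ) dτ + ∫₀^t (t-τ)^{α-1} E_{α,α}((t-τ)^α A) g(τ) dτ belongs to C⁰_{1-α}([0,∞), ℝ^s), and hence lim_{t→∞} φ(t) = 0. -/
open Filter Topology MeasureTheory

attribute [local instance] Matrix.linftyOpNormedAddCommGroup Matrix.linftyOpNormedRing

lemma aux_gamma_lower (T x : ℝ) (hT : 0 < T) (hx : 1 ≤ x) :
    T ^ (x - 1) * Real.exp (-T) ≤ Real.Gamma x := by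
  rw [Real.Gamma_eq_integral (by linarith)]
  have hint := Real.GammaIntegral_convergent (s := x) (by linarith)
  calc T ^ (x - 1) * Real.exp (-T) = ∫ t in Set.Ioi T, T ^ (x - 1) * Real.exp (-t) := by
        rw [integral_const_mul, integral_exp_neg_Ioi]
    _ ≤ ∫ t in Set.Ioi T, Real.exp (-t) * t ^ (x - 1) := by
        apply setIntegral_mono_on
        · exact (integrableOn_exp_neg_Ioi T).const_mul _
        · exact hint.mono_set (Set.Ioi_subset_Ioi hT.le)
        · exact measurableSet_Ioi
        · intro t ht
          rw [mul_comm]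
          gcongr
          exact le_of_lt ht
    _ ≤ ∫ t in Set.Ioi 0, Real.exp (-t) * t ^ (x - 1) := by
        apply setIntegral_mono_set hint
        · filter_upwards [ae_restrict_mem measurableSet_Ioi] with t ht
          have : (0:ℝ) < t := ht
          simp only [Pi.zero_apply]
          positivity
        · exact (Set.Ioi_subset_Ioi hT.le).eventuallyLE

lemma aux_summable (α : ℝ) (hα : 0 < α) (R : ℝ) (hR : 0 ≤ R) :
    Summable fun k : ℕ => (Real.Gamma (α * k + α))⁻¹ * R ^ k := by
  set T : ℝ := (2 * (R + 1)) ^ (1 / α) with hTdef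
  have hT : 0 < T := by positivity
  have hTα : T ^ α = 2 * (R + 1) := by
    rw [hTdef, ← Real.rpow_mul (by positivity)]
    field_simp
    simp
  have hs : Summable fun k : ℕ => (Real.exp T * T ^ (1 - α)) * (1 / 2 : ℝ) ^ k :=
    (summable_geometric_two).mul_left _
  apply Summable.of_norm_bounded_eventually_nat hs
  have hev : ∀ᶠ k : ℕ in atTop, 1 / α ≤ (k : ℝ) :=
    tendsto_natCast_atTop_atTop.eventually_ge_atTop _
  filter_upwards [hev] with k hk
  have hk1 : 1 ≤ α * k + α := by
    rw [div_le_iff₀ hα] at hk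
    nlinarith
  have hlow := aux_gamma_lower T (α * k + α) hT hk1
  have hG : 0 < Real.Gamma (α * k + α) := Real.Gamma_pos_of_pos (by linarith)
  rw [Real.norm_of_nonneg (by positivity), inv_mul_le_iff₀ hG]
  have e1 : T ^ (α * k + α - 1) = (2 * (R + 1)) ^ k * T ^ (α - 1) := by
    rw [add_sub_assoc, Real.rpow_add hT, Real.rpow_mul hT.le, hTα, Real.rpow_natCast]
  rw [e1] at hlow
  have e2 : T ^ (α - 1) * T ^ (1 - α) = 1 := by
    rw [← Real.rpow_add hT]; simp
  have e3 : Real.exp (-T) * Real.exp T = 1 := by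
    rw [← Real.exp_add]; simp
  calc R ^ k ≤ (R + 1) ^ k := by gcongr; linarith
    _ = ((2 * (R + 1)) ^ k * T ^ (α - 1) * Real.exp (-T)) *
        (Real.exp T * T ^ (1 - α) * (1 / 2) ^ k) := by
        have : (2 * (R + 1)) ^ k * (1 / 2) ^ k = (R + 1) ^ k := by
          rw [← mul_pow]; congr 1; ring
        calc (R + 1) ^ k = ((2 * (R + 1)) ^ k * (1 / 2) ^ k) * (T ^ (α - 1) * T ^ (1 - α)) *
              (Real.exp (-T) * Real.exp T) := by rw [this, e2, e3]; ring
          _ = _ := by ring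
    _ ≤ _ := by gcongr

lemma aux_entry_le {s : ℕ} (M : Matrix (Fin s) (Fin s) ℝ) (i j : Fin s) : |M i j| ≤ ‖M‖ := by
  have h := Matrix.linfty_opNorm_mulVec M (Pi.single j 1)
  have h1 : ‖(Pi.single j 1 : Fin s → ℝ)‖ ≤ 1 := by
    rw [pi_norm_le_iff_of_nonneg zero_le_one]
    intro k
    by_cases hk : k = j
    · subst hk; simp
    · simp [Pi.single_eq_of_ne hk]
  have h2 := norm_le_pi_norm (M.mulVec (Pi.single j 1)) i
  rw [Matrix.mulVec_single_one] at h2 h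
  have h3 : |M i j| ≤ ‖M.col j‖ := h2
  nlinarith [norm_nonneg M]

lemma aux_pow_entry_le {s : ℕ} (A : Matrix (Fin s) (Fin s) ℝ) (k : ℕ) (i j : Fin s) :
    |(A ^ k) i j| ≤ ‖A‖ ^ k := by
  have : Nonempty (Fin s) := ⟨i⟩
  have : NormOneClass (Matrix (Fin s) (Fin s) ℝ) := Matrix.linfty_opNormOneClass
  exact (aux_entry_le _ i j).trans (norm_pow_le A k)

lemma aux_summable_entry {s : ℕ} (α : ℝ) (hα : 0 < α) (A : Matrix (Fin s) (Fin s) ℝ)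
    (u : ℝ) (i j : Fin s) :
    Summable fun k : ℕ => (Real.Gamma (α * k + α))⁻¹ * (u ^ k * (A ^ k) i j) := by
  apply Summable.of_norm_bounded (aux_summable α hα (|u| * ‖A‖) (by positivity))
  intro k
  have hG : 0 < Real.Gamma (α * k + α) := Real.Gamma_pos_of_pos (by positivity)
  rw [norm_mul, Real.norm_of_nonneg (inv_nonneg.2 hG.le), norm_mul, norm_pow, mul_pow]
  have := aux_pow_entry_le A k i j
  simp only [Real.norm_eq_abs]
  gcongr

lemma aux_hasSum_entry {s : ℕ} (α : ℝ) (hα : 0 < α) (A : Matrix (Fin s) (Fin s) ℝ)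
    (u : ℝ) (i j : Fin s) :
    HasSum (fun k : ℕ => (Real.Gamma (α * k + α))⁻¹ * (u ^ k * (A ^ k) i j))
      (ML α α (u • A) i j) := by
  have hsum : Summable fun k : ℕ => (Real.Gamma (α * k + α))⁻¹ • (u • A) ^ k := by
    refine Pi.summable.2 fun i => Pi.summable.2 fun j => ?_
    refine (aux_summable_entry α hα A u i j).congr fun k => ?_
    simp [smul_pow, Matrix.smul_apply]
  have h := Pi.hasSum.1 (Pi.hasSum.1 hsum.hasSum i) j
  refine h.congr_fun ?_ |> fun h => h
  intro k
  simp [smul_pow, Matrix.smul_apply]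

lemma aux_ml_continuous {s : ℕ} (α : ℝ) (hα : 0 < α) (A : Matrix (Fin s) (Fin s) ℝ) :
    Continuous fun u : ℝ => ML α α (u • A) := by
  refine continuous_matrix fun i j => ?_
  have e : (fun u : ℝ => ML α α (u • A) i j) = fun u : ℝ =>
      ∑' k : ℕ, (Real.Gamma (α * k + α))⁻¹ * (u ^ k * (A ^ k) i j) := by
    funext u
    exact (aux_hasSum_entry α hα A u i j).tsum_eq.symm
  rw [e, continuous_iff_continuousAt]
  intro u₀
  have hc : ContinuousOn (fun u : ℝ =>
      ∑' k : ℕ, (Real.Gamma (α * k + α))⁻¹ * (u ^ k * (A ^ k) i j))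
      (Metric.ball 0 (|u₀| + 1)) := by
    refine continuousOn_tsum (u := fun k : ℕ =>
      (Real.Gamma (α * k + α))⁻¹ * ((|u₀| + 1) * ‖A‖) ^ k) ?_
      (aux_summable α hα _ (by positivity)) ?_
    · intro k; fun_prop
    · intro k u hu
      have hG : 0 < Real.Gamma (α * k + α) := Real.Gamma_pos_of_pos (by positivity)
      rw [norm_mul, Real.norm_of_nonneg (inv_nonneg.2 hG.le), norm_mul, norm_pow, mul_pow]
      have := aux_pow_entry_le A k i j
      have hu' : |u| ≤ |u₀| + 1 := by
        rw [Metric.mem_ball, dist_zero_right, Real.norm_eq_abs] at hu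
        exact hu.le
      simp only [Real.norm_eq_abs]
      gcongr
  refine hc.continuousAt (Metric.isOpen_ball.mem_nhds ?_)
  simp

lemma aux_norm_continuous {s : ℕ} :
    Continuous fun M : Matrix (Fin s) (Fin s) ℝ => ‖M‖ := by
  exact (continuous_norm : @Continuous (Matrix (Fin s) (Fin s) ℝ) ℝ
    PseudoMetricSpace.toUniformSpace.toTopologicalSpace _ norm)

lemma aux_hasSum_mulVec {s : ℕ} (α : ℝ) (hα : 0 < α) (A : Matrix (Fin s) (Fin s) ℝ)
    (u : ℝ) (v : Fin s → ℝ) :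
    HasSum (fun k : ℕ => ((Real.Gamma (α * k + α))⁻¹ * u ^ k) • (A ^ k).mulVec v)
      ((ML α α (u • A)).mulVec v) := by
  refine Pi.hasSum.2 fun i => ?_
  have h := hasSum_sum (s := Finset.univ) (fun j (_ : j ∈ Finset.univ) =>
    (aux_hasSum_entry α hα A u i j).mul_right (v j))
  suffices e : (fun k : ℕ => (((Real.Gamma (α * k + α))⁻¹ * u ^ k) • (A ^ k).mulVec v) i) =
      fun k : ℕ => ∑ j, (Real.Gamma (α * k + α))⁻¹ * (u ^ k * (A ^ k) i j) * v j by
    rw [e]; exact h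
  funext k
  simp only [Pi.smul_apply, Matrix.mulVec, dotProduct, smul_eq_mul, Finset.mul_sum]
  refine Finset.sum_congr rfl fun j _ => ?_
  ring

lemma aux_beta_int (a b : ℝ) (ha : 0 < a) (hb : 0 < b) :
    IntervalIntegrable (fun r : ℝ => r ^ (a - 1) * (1 - r) ^ (b - 1)) volume 0 1 ∧
    ∫ r in (0:ℝ)..1, r ^ (a - 1) * (1 - r) ^ (b - 1) =
      Real.Gamma a * Real.Gamma b / Real.Gamma (a + b) := by
  have h := Complex.betaIntegral_convergent (u := a) (v := b) (by simpa) (by simpa)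
  have hcongr : ∀ r ∈ Set.uIcc (0:ℝ) 1, (r:ℂ) ^ ((a:ℂ) - 1) * (1 - (r:ℂ)) ^ ((b:ℂ) - 1) =
      ((r ^ (a - 1) * (1 - r) ^ (b - 1) : ℝ) : ℂ) := by
    intro r hr
    rw [Set.uIcc_of_le zero_le_one] at hr
    push_cast
    rw [Complex.ofReal_cpow hr.1, Complex.ofReal_cpow (by linarith [hr.2])]
    push_cast
    rfl
  constructor
  · rw [intervalIntegrable_iff_integrableOn_Ioc_of_le zero_le_one] at h ⊢
    refine IntegrableOn.congr_fun (h.re) ?_ measurableSet_Ioc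
    intro r hr
    have := hcongr r (by rw [Set.uIcc_of_le zero_le_one]; exact Set.Ioc_subset_Icc_self hr)
    simp only [this]
    exact Complex.ofReal_re _
  · have h3 := Complex.betaIntegral_eq_Gamma_mul_div a b (by simpa) (by simpa)
    rw [Complex.betaIntegral, intervalIntegral.integral_congr hcongr,
      intervalIntegral.integral_ofReal, Complex.Gamma_ofReal, Complex.Gamma_ofReal,
      ← Complex.ofReal_add, Complex.Gamma_ofReal] at h3
    exact_mod_cast h3

lemma aux_pow_mulVec_le {s : ℕ} (A : Matrix (Fin s) (Fin s) ℝ) (v : Fin s → ℝ) (k : ℕ) :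
    ‖(A ^ k).mulVec v‖ ≤ ‖A‖ ^ k * ‖v‖ := by
  induction k with
  | zero => simp
  | succ k ih =>
    rw [pow_succ', ← Matrix.mulVec_mulVec, pow_succ', mul_assoc]
    refine (Matrix.linfty_opNorm_mulVec _ _).trans ?_
    gcongr

lemma aux_identity {s : ℕ} (α : ℝ) (hα : 0 < α) (A : Matrix (Fin s) (Fin s) ℝ)
    (u : ℝ) (v : Fin s → ℝ) :
    (ML α α (u • A)).mulVec v = (Real.Gamma α)⁻¹ • v + (u * (Real.Gamma α)⁻¹) •
      A.mulVec (∫ r in (0:ℝ)..1, (r ^ (α - 1) * (1 - r) ^ (α - 1)) •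
        (ML α α ((u * (1 - r) ^ α) • A)).mulVec v) := by
  have hGα : 0 < Real.Gamma α := Real.Gamma_pos_of_pos hα
  have hsum0 : Summable fun k : ℕ =>
      (Real.Gamma (α * k + α))⁻¹ * (|u| * ‖A‖) ^ k * ‖v‖ :=
    (aux_summable α hα (|u| * ‖A‖) (by positivity)).mul_right _
  have hI := intervalIntegral.hasSum_integral_of_dominated_convergence (μ := volume)
    (a := 0) (b := 1)
    (F := fun (k : ℕ) (r : ℝ) => (r ^ (α - 1) * (1 - r) ^ (α - 1)) •
      (((Real.Gamma (α * k + α))⁻¹ * (u * (1 - r) ^ α) ^ k) • (A ^ k).mulVec v))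
    (f := fun r => (r ^ (α - 1) * (1 - r) ^ (α - 1)) •
        (ML α α ((u * (1 - r) ^ α) • A)).mulVec v)
    (bound := fun k r => (r ^ (α - 1) * (1 - r) ^ (α - 1)) *
      ((Real.Gamma (α * k + α))⁻¹ * (|u| * ‖A‖) ^ k * ‖v‖)) ?_ ?_ ?_ ?_ ?_
  rotate_left
  · intro k
    apply Measurable.aestronglyMeasurable
    fun_prop
  · intro k
    refine Filter.Eventually.of_forall fun r hr => ?_
    rw [Set.uIoc_of_le zero_le_one] at hr
    have hG : 0 < Real.Gamma (α * k + α) := Real.Gamma_pos_of_pos (by positivity)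
    have h0 : 0 ≤ r := hr.1.le
    have h1 : 0 ≤ 1 - r := by linarith [hr.2]
    have h2 : (1 - r) ^ α ≤ 1 := Real.rpow_le_one h1 (by linarith) hα.le
    have h3 : 0 ≤ (1 - r) ^ α := Real.rpow_nonneg h1 _
    have h4 := aux_pow_mulVec_le A v k
    rw [norm_smul, Real.norm_of_nonneg (by positivity), norm_smul, norm_mul,
      Real.norm_of_nonneg (inv_nonneg.2 hG.le), norm_pow, norm_mul, Real.norm_eq_abs,
      Real.norm_of_nonneg h3]
    have h5 : |u| * (1 - r) ^ α ≤ |u| := mul_le_of_le_one_right (abs_nonneg _) h2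
    rw [mul_pow |u| ‖A‖, mul_assoc _ _ ‖v‖, mul_assoc (|u| ^ k), mul_assoc _ _ ‖(A ^ k).mulVec v‖]
    gcongr
  · exact Filter.Eventually.of_forall fun r hr => hsum0.mul_left _
  · simp_rw [tsum_mul_left]
    exact (aux_beta_int α α hα hα).1.mul_const _
  · refine Filter.Eventually.of_forall fun r hr => ?_
    exact (aux_hasSum_mulVec α hα A (u * (1 - r) ^ α) v).const_smul _
  have hterm : ∀ k : ℕ, (∫ r in (0:ℝ)..1, (r ^ (α - 1) * (1 - r) ^ (α - 1)) •
      (((Real.Gamma (α * k + α))⁻¹ * (u * (1 - r) ^ α) ^ k) • (A ^ k).mulVec v)) =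
      (Real.Gamma α * (Real.Gamma (α * (k + 1 : ℕ) + α))⁻¹ * u ^ k) • (A ^ k).mulVec v := by
    intro k
    have hG : 0 < Real.Gamma (α * k + α) := Real.Gamma_pos_of_pos (by positivity)
    have e : ∀ᵐ r : ℝ ∂volume, r ∈ Set.uIoc (0:ℝ) 1 → (r ^ (α - 1) * (1 - r) ^ (α - 1)) •
      (((Real.Gamma (α * k + α))⁻¹ * (u * (1 - r) ^ α) ^ k) • (A ^ k).mulVec v) =
      (r ^ (α - 1) * (1 - r) ^ ((α * k + α) - 1)) •
        (((Real.Gamma (α * k + α))⁻¹ * u ^ k) • (A ^ k).mulVec v) := by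
      have hne : ∀ᵐ r : ℝ ∂volume, r ≠ 1 := by
        simp [ae_iff]
      filter_upwards [hne] with r hr1 hr
      rw [Set.uIoc_of_le zero_le_one] at hr
      have h1 : 0 < 1 - r := by
        have := lt_of_le_of_ne hr.2 hr1
        linarith
      rw [smul_smul, smul_smul]
      congr 1
      rw [add_sub_assoc, Real.rpow_add h1, Real.rpow_mul h1.le, Real.rpow_natCast, mul_pow]
      ring
    rw [intervalIntegral.integral_congr_ae e, intervalIntegral.integral_smul_const,
      (aux_beta_int α (α * k + α) hα (by positivity)).2, smul_smul]
    congr 1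
    have : α + (α * k + α) = α * (k + 1 : ℕ) + α := by push_cast; ring
    rw [this]
    field_simp
  simp_rw [hterm] at hI
  have hL := (hasSum_nat_add_iff' 1).2 (aux_hasSum_mulVec α hα A u v)
  have hR : HasSum (fun k : ℕ => (u * (Real.Gamma α)⁻¹) •
      A.mulVec ((Real.Gamma α * (Real.Gamma (α * (k + 1 : ℕ) + α))⁻¹ * u ^ k) • (A ^ k).mulVec v))
      ((u * (Real.Gamma α)⁻¹) • A.mulVec (∫ r in (0:ℝ)..1, (r ^ (α - 1) * (1 - r) ^ (α - 1)) •
        (ML α α ((u * (1 - r) ^ α) • A)).mulVec v)) := by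
    refine HasSum.const_smul _ ?_
    exact hI.map (Matrix.mulVecLin A) (LinearMap.continuous_of_finiteDimensional _)
  have he : (fun k : ℕ => (u * (Real.Gamma α)⁻¹) •
      A.mulVec ((Real.Gamma α * (Real.Gamma (α * (k + 1 : ℕ) + α))⁻¹ * u ^ k) • (A ^ k).mulVec v))
      = fun k : ℕ => ((Real.Gamma (α * (k + 1 : ℕ) + α))⁻¹ * u ^ (k + 1)) •
        (A ^ (k + 1)).mulVec v := by
    funext k
    rw [Matrix.mulVec_smul, smul_smul, Matrix.mulVec_mulVec, ← pow_succ']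
    congr 1
    field_simp
    ring
  rw [he] at hR
  have := hL.unique hR
  rw [← this]
  simp

lemma aux_bound_s12 {s : ℕ} (α : ℝ) (hα : 0 < α) (A : Matrix (Fin s) (Fin s) ℝ)
    (u : ℝ) (hu : 0 ≤ u) (v : Fin s → ℝ) :
    ‖(ML α α (u • A)).mulVec v‖ ≤ (Real.Gamma α)⁻¹ * ‖v‖ + (Real.Gamma α)⁻¹ * (‖A‖ *
      ((u * ∫ r in (0:ℝ)..1, (r ^ (α - 1) * (1 - r) ^ (α - 1)) *
        ‖ML α α ((u * (1 - r) ^ α) • A)‖) * ‖v‖)) := by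
  have hGα : 0 < Real.Gamma α := Real.Gamma_pos_of_pos hα
  have hcont : Continuous fun r : ℝ => ‖ML α α ((u * (1 - r) ^ α) • A)‖ := by
    refine aux_norm_continuous.comp ((aux_ml_continuous α hα A).comp ?_)
    have := Real.continuous_rpow_const (q := α) hα.le
    fun_prop
  have hint : ‖∫ r in (0:ℝ)..1, (r ^ (α - 1) * (1 - r) ^ (α - 1)) •
        (ML α α ((u * (1 - r) ^ α) • A)).mulVec v‖ ≤
      (∫ r in (0:ℝ)..1, (r ^ (α - 1) * (1 - r) ^ (α - 1)) *
        ‖ML α α ((u * (1 - r) ^ α) • A)‖) * ‖v‖ := by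
    rw [← intervalIntegral.integral_mul_const]
    refine intervalIntegral.norm_integral_le_of_norm_le zero_le_one ?_ ?_
    · refine Filter.Eventually.of_forall fun r hr => ?_
      have h0 : 0 ≤ r := hr.1.le
      have h1 : 0 ≤ 1 - r := by linarith [hr.2]
      rw [norm_smul, Real.norm_of_nonneg (by positivity), mul_assoc _ _ ‖v‖]
      exact mul_le_mul_of_nonneg_left (Matrix.linfty_opNorm_mulVec
        (ML α α ((u * (1 - r) ^ α) • A)) v) (by positivity)
    · exact ((aux_beta_int α α hα hα).1.mul_continuousOn hcont.continuousOn).mul_const _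
  rw [aux_identity α hα A u v]
  refine (norm_add_le _ _).trans ?_
  rw [norm_smul, norm_smul, Real.norm_of_nonneg (by positivity),
    Real.norm_of_nonneg (by positivity : 0 ≤ u * (Real.Gamma α)⁻¹)]
  have h2 := Matrix.linfty_opNorm_mulVec A (∫ r in (0:ℝ)..1, (r ^ (α - 1) * (1 - r) ^ (α - 1)) •
        (ML α α ((u * (1 - r) ^ α) • A)).mulVec v)
  have h3 := h2.trans (mul_le_mul_of_nonneg_left hint (norm_nonneg A))
  have h4 := mul_le_mul_of_nonneg_left h3 (by positivity : 0 ≤ u * (Real.Gamma α)⁻¹)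
  linarith

/-- General continuity of parameter integrals with an integrable weight. -/
lemma aux_param_cont {s : ℕ} (w : ℝ → ℝ) (hw : IntervalIntegrable w volume 0 1)
    (h : ℝ → ℝ → (Fin s → ℝ))
    (hh : ContinuousOn (fun p : ℝ × ℝ => h p.1 p.2) (Set.univ ×ˢ Set.Icc 0 1)) :
    Continuous fun t : ℝ => ∫ r in (0:ℝ)..1, w r • h t r := by
  rw [continuous_iff_continuousAt]
  intro t₀
  have hK : IsCompact (Set.Icc (t₀ - 1) (t₀ + 1) ×ˢ Set.Icc (0:ℝ) 1) :=
    isCompact_Icc.prod isCompact_Icc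
  obtain ⟨C, hC⟩ := hK.exists_bound_of_continuousOn
    (hh.mono (Set.prod_mono_left (Set.subset_univ _)))
  have hnhds : Set.Icc (t₀ - 1) (t₀ + 1) ∈ 𝓝 t₀ := Icc_mem_nhds (by linarith) (by linarith)
  have hc1 : ∀ t, ContinuousOn (fun r => h t r) (Set.Icc 0 1) := by
    intro t
    exact hh.comp (f := fun r : ℝ => (t, r)) (by fun_prop) (fun r hr => ⟨trivial, hr⟩)
  have hc2 : ∀ r ∈ Set.Icc (0:ℝ) 1, Continuous (fun t => h t r) := by
    intro r hr
    rw [← continuousOn_univ]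
    exact hh.comp (f := fun t : ℝ => (t, r)) (by fun_prop) (fun t _ => ⟨trivial, hr⟩)
  refine intervalIntegral.continuousAt_of_dominated_interval
    (bound := fun r => |w r| * C) ?_ ?_ ?_ ?_
  · refine Filter.Eventually.of_forall fun t => ?_
    rw [Set.uIoc_of_le zero_le_one]
    refine AEStronglyMeasurable.smul hw.1.aestronglyMeasurable ?_
    exact ((hc1 t).mono Set.Ioc_subset_Icc_self).aestronglyMeasurable measurableSet_Ioc
  · filter_upwards [hnhds] with t ht
    refine Filter.Eventually.of_forall fun r hr => ?_
    rw [Set.uIoc_of_le zero_le_one] at hr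
    rw [norm_smul, Real.norm_eq_abs]
    exact mul_le_mul_of_nonneg_left (hC (t, r) ⟨ht, Set.Ioc_subset_Icc_self hr⟩) (abs_nonneg _)
  · exact hw.abs.mul_const _
  · refine Filter.Eventually.of_forall fun r hr => ?_
    rw [Set.uIoc_of_le zero_le_one] at hr
    exact ((hc2 r (Set.Ioc_subset_Icc_self hr)).const_smul (w r)).continuousAt

noncomputable def auxQ {s : ℕ} (α : ℝ) (A : Matrix (Fin s) (Fin s) ℝ)
    (Q : ℝ → Matrix (Fin s) (Fin s) ℝ) (y : ℝ → (Fin s → ℝ)) (t : ℝ) : Fin s → ℝ :=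
  ∫ r in (0:ℝ)..1, (r ^ (α - 1) * (1 - r) ^ (α - 1)) •
    (ML α α ((max t 0 ^ α * (1 - r) ^ α) • A) * Q (max t 0 * r)).mulVec (y (max t 0 * r))

noncomputable def auxG {s : ℕ} (α : ℝ) (A : Matrix (Fin s) (Fin s) ℝ)
    (g : ℝ → (Fin s → ℝ)) (t : ℝ) : Fin s → ℝ :=
  ∫ r in (0:ℝ)..1, ((1 - r) ^ (α - 1)) •
    (ML α α ((max t 0 ^ α * (1 - r) ^ α) • A)).mulVec (g (max t 0 * r))

noncomputable def auxPhi {s : ℕ} (α : ℝ) (A : Matrix (Fin s) (Fin s) ℝ)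
    (Q : ℝ → Matrix (Fin s) (Fin s) ℝ) (g : ℝ → (Fin s → ℝ)) (x₀ : Fin s → ℝ)
    (y : ℝ → (Fin s → ℝ)) (t : ℝ) : Fin s → ℝ :=
  (ML α α (max t 0 ^ α • A)).mulVec x₀ + max t 0 ^ α • auxQ α A Q y t
    + max t 0 • auxG α A g t

lemma aux_ml2_cont {s : ℕ} (α : ℝ) (hα : 0 < α) (A : Matrix (Fin s) (Fin s) ℝ) :
    Continuous fun p : ℝ × ℝ => ML α α ((max p.1 0 ^ α * (1 - p.2) ^ α) • A) := by
  refine (aux_ml_continuous α hα A).comp (g := fun u : ℝ => ML α α (u • A)) ?_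
  have h := Real.continuous_rpow_const (q := α) hα.le
  exact (h.comp (continuous_fst.max continuous_const)).mul
    (h.comp (continuous_const.sub continuous_snd))

lemma aux_arg_cont {E : Type*} [TopologicalSpace E] (f : ℝ → E)
    (hf : ContinuousOn f (Set.Ici 0)) :
    ContinuousOn (fun p : ℝ × ℝ => f (max p.1 0 * p.2)) (Set.univ ×ˢ Set.Icc 0 1) := by
  refine hf.comp (f := fun p : ℝ × ℝ => max p.1 0 * p.2) (by fun_prop) ?_
  rintro p ⟨-, hp⟩
  exact mul_nonneg (le_max_right _ _) hp.1

lemma aux_Q_cont {s : ℕ} (α : ℝ) (hα : 0 < α) (A : Matrix (Fin s) (Fin s) ℝ)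
    (Q : ℝ → Matrix (Fin s) (Fin s) ℝ) (hQ : ContinuousOn Q (Set.Ici 0))
    (y : ℝ → (Fin s → ℝ)) (hy : ContinuousOn y (Set.Ici 0)) :
    Continuous (auxQ α A Q y) := by
  have h1 : ContinuousOn (fun p : ℝ × ℝ => ML α α ((max p.1 0 ^ α * (1 - p.2) ^ α) • A))
    (Set.univ ×ˢ Set.Icc (0:ℝ) 1) := (aux_ml2_cont α hα A).continuousOn
  have h2 := aux_arg_cont Q hQ
  have h3 := aux_arg_cont y hy
  have h4 : ContinuousOn (fun p : ℝ × ℝ => (ML α α ((max p.1 0 ^ α * (1 - p.2) ^ α) • A) *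
      Q (max p.1 0 * p.2)).mulVec (y (max p.1 0 * p.2))) (Set.univ ×ˢ Set.Icc (0:ℝ) 1) := by
    rw [continuousOn_iff_continuous_domRestrict] at h1 h2 h3 ⊢
    exact (h1.matrix_mul h2).matrix_mulVec h3
  unfold auxQ
  exact aux_param_cont _ (aux_beta_int α α hα hα).1 (fun t r =>
    (ML α α ((max t 0 ^ α * (1 - r) ^ α) • A) * Q (max t 0 * r)).mulVec (y (max t 0 * r))) h4

lemma aux_weight2 (α : ℝ) (hα : 0 < α) :
    IntervalIntegrable (fun r : ℝ => (1 - r) ^ (α - 1)) volume 0 1 := by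
  simpa using (aux_beta_int 1 α one_pos hα).1

lemma aux_G_cont {s : ℕ} (α : ℝ) (hα : 0 < α) (A : Matrix (Fin s) (Fin s) ℝ)
    (g : ℝ → (Fin s → ℝ)) (hg : ContinuousOn g (Set.Ici 0)) :
    Continuous (auxG α A g) := by
  refine aux_param_cont _ (aux_weight2 α hα) (fun t r =>
    (ML α α ((max t 0 ^ α * (1 - r) ^ α) • A)).mulVec (g (max t 0 * r))) ?_
  have h1 := (aux_ml2_cont α hα A).continuousOn (s := Set.univ ×ˢ Set.Icc (0:ℝ) 1)
  have h3 := aux_arg_cont g hg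
  have hm : Continuous fun q : (Matrix (Fin s) (Fin s) ℝ) ×
    (Fin s → ℝ) => (q.1).mulVec q.2 := by fun_prop
  exact hm.comp_continuousOn (h1.prodMk h3)

lemma aux_Phi_cont {s : ℕ} (α : ℝ) (hα : 0 < α) (A : Matrix (Fin s) (Fin s) ℝ)
    (Q : ℝ → Matrix (Fin s) (Fin s) ℝ) (hQ : ContinuousOn Q (Set.Ici 0))
    (g : ℝ → (Fin s → ℝ)) (hg : ContinuousOn g (Set.Ici 0)) (x₀ : Fin s → ℝ)
    (y : ℝ → (Fin s → ℝ)) (hy : ContinuousOn y (Set.Ici 0)) :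
    Continuous (auxPhi α A Q g x₀ y) := by
  have hm : Continuous fun t : ℝ => max t 0 := by fun_prop
  have hp : Continuous fun t : ℝ => max t 0 ^ α :=
    (Real.continuous_rpow_const (q := α) hα.le).comp hm
  have h1 : Continuous fun t : ℝ => (ML α α (max t 0 ^ α • A)).mulVec x₀ := by
    have h0 : Continuous fun t : ℝ => ML α α (max t 0 ^ α • A) :=
      (aux_ml_continuous α hα A).comp (g := fun u : ℝ => ML α α (u • A)) hp
    fun_prop
  exact (h1.add (hp.smul (aux_Q_cont α hα A Q hQ y hy))).add (hm.smul (aux_G_cont α hα A g hg))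

lemma aux_scale {E : Type*} [NormedAddCommGroup E] [NormedSpace ℝ E] (F : ℝ → E) (t : ℝ) :
    ∫ τ in (0:ℝ)..t, F τ = t • ∫ r in (0:ℝ)..1, F (t * r) := by
  rw [intervalIntegral.smul_integral_comp_mul_left]
  simp

lemma aux_rp (t r : ℝ) (ht : 0 < t) (hr : r ≤ 1) (b : ℝ) :
    (t - t * r) ^ b = t ^ b * (1 - r) ^ b := by
  rw [← Real.mul_rpow ht.le (by linarith)]
  congr 1; ring

lemma aux_scale_J {s : ℕ} (α : ℝ) (A : Matrix (Fin s) (Fin s) ℝ) (t : ℝ) (ht : 0 < t) :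
    t ^ (1 - α) * ∫ τ in (0:ℝ)..t,
        (t - τ) ^ (α - 1) * ‖ML α α ((t - τ) ^ α • A)‖ * τ ^ (α - 1) =
    t ^ α * ∫ r in (0:ℝ)..1, (r ^ (α - 1) * (1 - r) ^ (α - 1)) *
        ‖ML α α ((t ^ α * (1 - r) ^ α) • A)‖ := by
  rw [aux_scale, smul_eq_mul]
  have : ∀ r ∈ Set.uIcc (0:ℝ) 1, (t - t * r) ^ (α - 1) * ‖ML α α ((t - t * r) ^ α • A)‖ *
      (t * r) ^ (α - 1) = (t ^ (α - 1) * t ^ (α - 1)) * ((r ^ (α - 1) * (1 - r) ^ (α - 1)) *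
        ‖ML α α ((t ^ α * (1 - r) ^ α) • A)‖) := by
    intro r hr
    rw [Set.uIcc_of_le zero_le_one] at hr
    rw [aux_rp t r ht hr.2, aux_rp t r ht hr.2, Real.mul_rpow ht.le hr.1]
    ring
  rw [intervalIntegral.integral_congr this, intervalIntegral.integral_const_mul]
  have e : t ^ (1 - α) * (t * (t ^ (α - 1) * t ^ (α - 1))) = t ^ α := by
    nth_rewrite 2 [← Real.rpow_one t]
    rw [← Real.rpow_add ht, ← Real.rpow_add ht, ← Real.rpow_add ht]
    congr 1; ring
  rw [← e]; ring

lemma aux_scale_g {s : ℕ} {E : Type*} [NormedAddCommGroup E] [NormedSpace ℝ E] (α : ℝ)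
    (A : Matrix (Fin s) (Fin s) ℝ) (t : ℝ) (ht : 0 < t)
    (F : Matrix (Fin s) (Fin s) ℝ → ℝ → E) :
    t ^ (1 - α) • ∫ τ in (0:ℝ)..t, (t - τ) ^ (α - 1) • F (ML α α ((t - τ) ^ α • A)) τ =
    t • ∫ r in (0:ℝ)..1, (1 - r) ^ (α - 1) • F (ML α α ((t ^ α * (1 - r) ^ α) • A)) (t * r) := by
  rw [aux_scale]
  have : ∀ r ∈ Set.uIcc (0:ℝ) 1,
      (t - t * r) ^ (α - 1) • F (ML α α ((t - t * r) ^ α • A)) (t * r) =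
      (t ^ (α - 1)) • ((1 - r) ^ (α - 1) •
        F (ML α α ((t ^ α * (1 - r) ^ α) • A)) (t * r)) := by
    intro r hr
    rw [Set.uIcc_of_le zero_le_one] at hr
    rw [aux_rp t r ht hr.2, aux_rp t r ht hr.2, mul_smul]
  rw [intervalIntegral.integral_congr this, intervalIntegral.integral_smul, smul_smul, smul_smul]
  congr 1
  nth_rewrite 2 [← Real.rpow_one t]
  rw [← Real.rpow_add ht, ← Real.rpow_add ht]
  simp

lemma aux_scale_Phi {s : ℕ} (α : ℝ) (A : Matrix (Fin s) (Fin s) ℝ)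
    (Q : ℝ → Matrix (Fin s) (Fin s) ℝ) (g : ℝ → (Fin s → ℝ)) (x₀ : Fin s → ℝ)
    (y φ : ℝ → (Fin s → ℝ)) (hyφ : ∀ τ > 0, y τ = τ ^ (1 - α) • φ τ) (t : ℝ) (ht : 0 < t) :
    t ^ (1 - α) • (t ^ (α - 1) • (ML α α (t ^ α • A)).mulVec x₀
          + (∫ τ in (0:ℝ)..t, (t - τ) ^ (α - 1) •
              (ML α α ((t - τ) ^ α • A) * Q τ).mulVec (φ τ))
          + ∫ τ in (0:ℝ)..t, (t - τ) ^ (α - 1) •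
              (ML α α ((t - τ) ^ α • A)).mulVec (g τ)) = auxPhi α A Q g x₀ y t := by
  have h1 : t ^ (1 - α) * t ^ (α - 1) = 1 := by rw [← Real.rpow_add ht]; simp
  rw [smul_add, smul_add, smul_smul, h1, one_smul,
    aux_scale_g α A t ht (fun M τ => (M * Q τ).mulVec (φ τ)),
    aux_scale_g α A t ht (fun M τ => M.mulVec (g τ))]
  have hm : max t 0 = t := max_eq_left ht.le
  rw [auxPhi, auxG, auxQ, hm]
  congr 2
  have : ∀ᵐ r : ℝ ∂volume, r ∈ Set.uIoc (0:ℝ) 1 → (r ^ (α - 1) * (1 - r) ^ (α - 1)) •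
      (ML α α ((t ^ α * (1 - r) ^ α) • A) * Q (t * r)).mulVec (y (t * r)) =
      t ^ (1 - α) • ((1 - r) ^ (α - 1) •
        (ML α α ((t ^ α * (1 - r) ^ α) • A) * Q (t * r)).mulVec (φ (t * r))) := by
    refine Filter.Eventually.of_forall fun r hr => ?_
    rw [Set.uIoc_of_le zero_le_one] at hr
    have hr0 : 0 < r := hr.1
    rw [hyφ (t * r) (by positivity), Matrix.mulVec_smul, smul_smul, smul_smul]
    congr 1
    have h1 : r ^ (1 - α) * r ^ (α - 1) = 1 := by rw [← Real.rpow_add hr0]; simp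
    rw [Real.mul_rpow ht.le hr0.le]
    linear_combination (1 - r) ^ (α - 1) * t ^ (1 - α) * h1
  rw [intervalIntegral.integral_congr_ae this, intervalIntegral.integral_smul, smul_smul]
  congr 1
  rw [← Real.rpow_add ht]
  simp

lemma aux_Q_int {s : ℕ} (α : ℝ) (hα : 0 < α) (A : Matrix (Fin s) (Fin s) ℝ)
    (Q : ℝ → Matrix (Fin s) (Fin s) ℝ) (hQ : ContinuousOn Q (Set.Ici 0))
    (y : ℝ → (Fin s → ℝ)) (hy : ContinuousOn y (Set.Ici 0)) (p : ℝ) (hp : 0 ≤ p) :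
    IntervalIntegrable (fun r => (r ^ (α - 1) * (1 - r) ^ (α - 1)) •
    (ML α α ((p ^ α * (1 - r) ^ α) • A) * Q (p * r)).mulVec (y (p * r))) volume 0 1 := by
  have h1 : ContinuousOn (fun r : ℝ => ML α α ((p ^ α * (1 - r) ^ α) • A)) (Set.Icc (0:ℝ) 1) := by
    refine Continuous.continuousOn
      ((aux_ml_continuous α hα A).comp (g := fun u : ℝ => ML α α (u • A)) ?_)
    have := Real.continuous_rpow_const (q := α) hα.le
    fun_prop
  have hmap : Set.MapsTo (fun r : ℝ => p * r) (Set.Icc 0 1) (Set.Ici 0) :=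
    fun r hr => mul_nonneg hp hr.1
  have h2 : ContinuousOn (fun r : ℝ => Q (p * r)) (Set.Icc 0 1) :=
    hQ.comp (by fun_prop) hmap
  have h3 : ContinuousOn (fun r : ℝ => y (p * r)) (Set.Icc 0 1) :=
    hy.comp (by fun_prop) hmap
  have h4 : ContinuousOn (fun r : ℝ => (ML α α ((p ^ α * (1 - r) ^ α) • A) *
      Q (p * r)).mulVec (y (p * r))) (Set.Icc (0:ℝ) 1) := by
    rw [continuousOn_iff_continuous_domRestrict] at h1 h2 h3 ⊢
    exact (h1.matrix_mul h2).matrix_mulVec h3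
  rw [← Set.uIcc_of_le (zero_le_one' ℝ)] at h4
  exact (aux_beta_int α α hα hα).1.smul_continuousOn h4

lemma aux_Q_sub {s : ℕ} (α : ℝ) (hα : 0 < α) (A : Matrix (Fin s) (Fin s) ℝ)
    (Q : ℝ → Matrix (Fin s) (Fin s) ℝ) (hQ : ContinuousOn Q (Set.Ici 0))
    (y z : ℝ → (Fin s → ℝ)) (hy : ContinuousOn y (Set.Ici 0))
    (hz : ContinuousOn z (Set.Ici 0)) (t : ℝ) :
    auxQ α A Q y t - auxQ α A Q z t = auxQ α A Q (fun τ => y τ - z τ) t := by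
  unfold auxQ
  rw [← intervalIntegral.integral_sub (aux_Q_int α hα A Q hQ y hy _ (le_max_right _ _))
    (aux_Q_int α hα A Q hQ z hz _ (le_max_right _ _))]
  refine intervalIntegral.integral_congr fun r _ => ?_
  simp only [Matrix.mulVec_sub, smul_sub]

lemma aux_Q_norm {s : ℕ} (α : ℝ) (hα : 0 < α) (A : Matrix (Fin s) (Fin s) ℝ)
    (Q : ℝ → Matrix (Fin s) (Fin s) ℝ) (c : ℝ) (hc : ∀ t : ℝ, 0 ≤ t → ‖Q t‖ ≤ c)
    (y : ℝ → (Fin s → ℝ)) (D : ℝ) (hD : ∀ t, 0 ≤ t → ‖y t‖ ≤ D) (t : ℝ) :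
    ‖auxQ α A Q y t‖ ≤ (∫ r in (0:ℝ)..1, (r ^ (α - 1) * (1 - r) ^ (α - 1)) *
        ‖ML α α ((max t 0 ^ α * (1 - r) ^ α) • A)‖) * (c * D) := by
  have hc0 : 0 ≤ c := (norm_nonneg _).trans (hc 0 le_rfl)
  have hcont : Continuous fun r : ℝ => ‖ML α α ((max t 0 ^ α * (1 - r) ^ α) • A)‖ := by
    refine aux_norm_continuous.comp ((aux_ml_continuous α hα A).comp
      (g := fun u : ℝ => ML α α (u • A)) ?_)
    have := Real.continuous_rpow_const (q := α) hα.le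
    fun_prop
  unfold auxQ
  rw [← intervalIntegral.integral_mul_const]
  refine intervalIntegral.norm_integral_le_of_norm_le zero_le_one ?_ ?_
  · refine Filter.Eventually.of_forall fun r hr => ?_
    have h0 : 0 ≤ r := hr.1.le
    have h1 : 0 ≤ 1 - r := by linarith [hr.2]
    have h2 : 0 ≤ max t 0 * r := mul_nonneg (le_max_right _ _) h0
    have h3 := Matrix.linfty_opNorm_mulVec (Q (max t 0 * r)) (y (max t 0 * r))
    have h4 := Matrix.linfty_opNorm_mulVec (ML α α ((max t 0 ^ α * (1 - r) ^ α) • A))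
      ((Q (max t 0 * r)).mulVec (y (max t 0 * r)))
    have h5 : ‖Q (max t 0 * r)‖ * ‖y (max t 0 * r)‖ ≤ c * D :=
      mul_le_mul (hc _ h2) (hD _ h2) (norm_nonneg _) hc0
    rw [Matrix.mulVec_mulVec] at h4
    rw [norm_smul, Real.norm_of_nonneg (by positivity), mul_assoc _ _ (c * D)]
    refine mul_le_mul_of_nonneg_left ?_ (by positivity)
    exact h4.trans (mul_le_mul_of_nonneg_left (h3.trans h5) (norm_nonneg _))
  · exact ((aux_beta_int α α hα hα).1.mul_continuousOn hcont.continuousOn).mul_const _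

lemma aux_G_norm {s : ℕ} (α : ℝ) (A : Matrix (Fin s) (Fin s) ℝ)
    (g : ℝ → (Fin s → ℝ)) (C : ℝ) (hC : ∀ t : ℝ, 0 ≤ t →
      t ^ (1 - α) * ∫ τ in (0:ℝ)..t,
        (t - τ) ^ (α - 1) * ‖(ML α α ((t - τ) ^ α • A)).mulVec (g τ)‖ ≤ C) (t : ℝ)
    (ht : 0 < t) : ‖max t 0 • auxG α A g t‖ ≤ C := by
  refine le_trans ?_ (hC t ht.le)
  have h := aux_scale_g α A t ht (fun M τ => ‖M.mulVec (g τ)‖)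
  simp only [smul_eq_mul] at h
  rw [h, max_eq_left ht.le, norm_smul, Real.norm_of_nonneg ht.le]
  refine mul_le_mul_of_nonneg_left ?_ ht.le
  unfold auxG
  rw [max_eq_left ht.le]
  refine (intervalIntegral.norm_integral_le_integral_norm zero_le_one).trans (le_of_eq ?_)
  refine intervalIntegral.integral_congr fun r hr => ?_
  rw [Set.uIcc_of_le zero_le_one] at hr
  have h1 : 0 ≤ 1 - r := by linarith [hr.2]
  simp only [norm_smul]
  rw [Real.norm_of_nonneg (by positivity)]

theorem stmt12 (α : ℝ) (hα0 : 0 < α) (hα1 : α < 1) (s : ℕ)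
    (A : Matrix (Fin s) (Fin s) ℝ)
    (hspec : ∀ μ ∈ spectrum ℂ (A.map (algebraMap ℝ ℂ)),
      μ ≠ 0 ∧ α * Real.pi / 2 < |Complex.arg μ|)
    (Q : ℝ → Matrix (Fin s) (Fin s) ℝ) (hQc : ContinuousOn Q (Set.Ici 0))
    -- `sup_{t≥0} ‖Q(t)‖ < 1 / sup_{t≥0} t^{1-α} ∫₀ᵗ (t-τ)^{α-1} ‖E_{α,α}((t-τ)^α A)‖ τ^{α-1} dτ`
    (hQbd : ∃ c : ℝ, (∀ t : ℝ, 0 ≤ t → ‖Q t‖ ≤ c) ∧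
      c < 1 / (⨆ t : {t : ℝ // 0 ≤ t}, (t : ℝ) ^ (1 - α) * ∫ τ in (0:ℝ)..(t : ℝ),
        ((t : ℝ) - τ) ^ (α - 1) * ‖ML α α (((t : ℝ) - τ) ^ α • A)‖ * τ ^ (α - 1)))
    (g : ℝ → (Fin s → ℝ)) (hgc : ContinuousOn g (Set.Ici 0))
    (hgint : ∃ C : ℝ, ∀ t : ℝ, 0 ≤ t →
      t ^ (1 - α) * ∫ τ in (0:ℝ)..t,
        (t - τ) ^ (α - 1) * ‖(ML α α ((t - τ) ^ α • A)).mulVec (g τ)‖ ≤ C) :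
    ∀ x₀ : Fin s → ℝ, ∃ φ : ℝ → (Fin s → ℝ),
      memC0inf α φ ∧
      (∀ t > (0:ℝ),
        φ t = t ^ (α - 1) • (ML α α (t ^ α • A)).mulVec x₀
          + (∫ τ in (0:ℝ)..t, (t - τ) ^ (α - 1) •
              (ML α α ((t - τ) ^ α • A) * Q τ).mulVec (φ τ))
          + ∫ τ in (0:ℝ)..t, (t - τ) ^ (α - 1) •
              (ML α α ((t - τ) ^ α • A)).mulVec (g τ)) ∧
      (∀ ψ : ℝ → (Fin s → ℝ), memC0inf α ψ →
        (∀ t > (0:ℝ),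
          ψ t = t ^ (α - 1) • (ML α α (t ^ α • A)).mulVec x₀
            + (∫ τ in (0:ℝ)..t, (t - τ) ^ (α - 1) •
                (ML α α ((t - τ) ^ α • A) * Q τ).mulVec (ψ τ))
            + ∫ τ in (0:ℝ)..t, (t - τ) ^ (α - 1) •
                (ML α α ((t - τ) ^ α • A)).mulVec (g τ)) →
        ∀ t > (0:ℝ), ψ t = φ t) ∧
      Tendsto φ atTop (𝓝 0) := by
  intro x₀
  obtain ⟨c, hc, hcS⟩ := hQbd
  obtain ⟨C, hC⟩ := hgint
  have hc0 : 0 ≤ c := (norm_nonneg _).trans (hc 0 le_rfl)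
  set f : {t : ℝ // 0 ≤ t} → ℝ := fun t => (t : ℝ) ^ (1 - α) * ∫ τ in (0:ℝ)..(t : ℝ),
        ((t : ℝ) - τ) ^ (α - 1) * ‖ML α α (((t : ℝ) - τ) ^ α • A)‖ * τ ^ (α - 1) with hf
  set S : ℝ := ⨆ t, f t with hS
  have hSpos : 0 < S := by
    by_contra h
    have : 1 / S ≤ 0 := div_nonpos_of_nonneg_of_nonpos zero_le_one (not_lt.1 h)
    linarith
  have hbdd : BddAbove (Set.range f) := by
    by_contra h
    have h0 : S = 0 := Real.iSup_of_not_bddAbove h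
    linarith
  have hcS1 : c * S < 1 := by rwa [lt_div_iff₀ hSpos] at hcS
  have hJ0 : ∀ t : ℝ, 0 ≤ t → t ^ α * ∫ r in (0:ℝ)..1, (r ^ (α - 1) * (1 - r) ^ (α - 1)) *
        ‖ML α α ((t ^ α * (1 - r) ^ α) • A)‖ ≤ S := by
    intro t ht
    rcases ht.eq_or_lt with rfl | ht'
    · rw [Real.zero_rpow hα0.ne', zero_mul]; exact hSpos.le
    · rw [← aux_scale_J α A t ht']
      exact le_ciSup hbdd ⟨t, ht⟩
  have hQb : ∀ (y : ℝ → Fin s → ℝ) (D : ℝ), (∀ t, 0 ≤ t → ‖y t‖ ≤ D) → ∀ t,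
      ‖max t 0 ^ α • auxQ α A Q y t‖ ≤ c * S * D := by
    intro y D hD t
    have hD0 : 0 ≤ D := (norm_nonneg _).trans (hD 0 le_rfl)
    have hp : 0 ≤ max t 0 ^ α := Real.rpow_nonneg (le_max_right _ _) _
    rw [norm_smul, Real.norm_of_nonneg hp]
    calc _ ≤ max t 0 ^ α * ((∫ r in (0:ℝ)..1, (r ^ (α - 1) * (1 - r) ^ (α - 1)) *
        ‖ML α α ((max t 0 ^ α * (1 - r) ^ α) • A)‖) * (c * D)) :=
          mul_le_mul_of_nonneg_left (aux_Q_norm α hα0 A Q c hc y D hD t) hp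
      _ = (max t 0 ^ α * ∫ r in (0:ℝ)..1, (r ^ (α - 1) * (1 - r) ^ (α - 1)) *
        ‖ML α α ((max t 0 ^ α * (1 - r) ^ α) • A)‖) * (c * D) := by ring
      _ ≤ S * (c * D) :=
          mul_le_mul_of_nonneg_right (hJ0 _ (le_max_right _ _)) (by positivity)
      _ = c * S * D := by ring
  have hGα : 0 < Real.Gamma α := Real.Gamma_pos_of_pos hα0
  have hx0b : ∀ t : ℝ, ‖(ML α α (max t 0 ^ α • A)).mulVec x₀‖ ≤
      (Real.Gamma α)⁻¹ * ‖x₀‖ + (Real.Gamma α)⁻¹ * (‖A‖ * (S * ‖x₀‖)) := by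
    intro t
    refine (aux_bound_s12 α hα0 A _ (Real.rpow_nonneg (le_max_right _ _) _) x₀).trans ?_
    have := hJ0 (max t 0) (le_max_right _ _)
    gcongr
  have hGb : ∀ t : ℝ, ‖max t 0 • auxG α A g t‖ ≤ max C 0 := by
    intro t
    rcases le_or_gt t 0 with ht | ht
    · rw [max_eq_right ht]; simp
    · exact (aux_G_norm α A g C hC t ht).trans (le_max_left _ _)
  -- the contraction
  have hcontΦ : ∀ y : BoundedContinuousFunction ℝ (Fin s → ℝ),
      Continuous (auxPhi α A Q g x₀ y) := fun y =>
    aux_Phi_cont α hα0 A Q hQc g hgc x₀ y y.continuous.continuousOn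
  have hbdΦ : ∀ y : BoundedContinuousFunction ℝ (Fin s → ℝ), ∀ t,
      ‖auxPhi α A Q g x₀ y t‖ ≤ ((Real.Gamma α)⁻¹ * ‖x₀‖ +
        (Real.Gamma α)⁻¹ * (‖A‖ * (S * ‖x₀‖))) + c * S * ‖y‖ + max C 0 := by
    intro y t
    unfold auxPhi
    refine (norm_add_le _ _).trans (add_le_add ((norm_add_le _ _).trans (add_le_add ?_ ?_)) ?_)
    · exact hx0b t
    · exact hQb y ‖y‖ (fun t _ => y.norm_coe_le_norm t) t
    · exact hGb t
  let Φ : BoundedContinuousFunction ℝ (Fin s → ℝ) → BoundedContinuousFunction ℝ (Fin s → ℝ) :=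
    fun y => BoundedContinuousFunction.ofNormedAddCommGroup (auxPhi α A Q g x₀ y) (hcontΦ y) _
      (hbdΦ y)
  have hΦ : ∀ y t, Φ y t = auxPhi α A Q g x₀ y t := fun y t => rfl
  have hcontr : ContractingWith (Real.toNNReal (c * S)) Φ := by
    constructor
    · rw [← Real.toNNReal_one]
      exact (Real.toNNReal_lt_toNNReal_iff one_pos).2 hcS1
    · refine LipschitzWith.of_dist_le_mul fun y z => ?_
      rw [Real.coe_toNNReal _ (by positivity)]
      refine (BoundedContinuousFunction.dist_le (by positivity)).2 fun t => ?_
      rw [hΦ, hΦ, dist_eq_norm]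
      have e : auxPhi α A Q g x₀ y t - auxPhi α A Q g x₀ z t =
          max t 0 ^ α • auxQ α A Q (fun τ => y τ - z τ) t := by
        rw [← aux_Q_sub α hα0 A Q hQc y z y.continuous.continuousOn z.continuous.continuousOn,
          smul_sub]
        unfold auxPhi
        abel
      rw [e]
      refine hQb _ _ (fun τ _ => ?_) t
      rw [← dist_eq_norm]
      exact BoundedContinuousFunction.dist_coe_le_dist τ
  set y := ContractingWith.fixedPoint Φ hcontr with hy
  have hyfix : Φ y = y := hcontr.fixedPoint_isFixedPt
  have hrp : ∀ t : ℝ, 0 < t → t ^ (1 - α) * t ^ (α - 1) = 1 := by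
    intro t ht
    rw [← Real.rpow_add ht]; simp
  have hyφ : ∀ τ > (0:ℝ), y τ = τ ^ (1 - α) • (τ ^ (α - 1) • y τ) := by
    intro τ hτ
    rw [smul_smul, hrp τ hτ, one_smul]
  have hcrp : ∀ b : ℝ, ContinuousOn (fun t : ℝ => t ^ b) (Set.Ioi 0) := fun b t ht =>
    (Real.continuousAt_rpow_const t b (Or.inl (ne_of_gt ht))).continuousWithinAt
  refine ⟨fun t => t ^ (α - 1) • y t, ⟨?_, ?_, ?_⟩, ?_, ?_, ?_⟩
  · exact (hcrp _).smul y.continuous.continuousOn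
  · refine ⟨y 0, ?_⟩
    have h1 : Tendsto y (𝓝[>] 0) (𝓝 (y 0)) := (y.continuous.tendsto 0).mono_left nhdsWithin_le_nhds
    refine h1.congr' ?_
    filter_upwards [self_mem_nhdsWithin] with t ht
    exact hyφ t ht
  · refine ⟨‖y‖, fun t ht => ?_⟩
    rcases ht.eq_or_lt with rfl | ht'
    · rw [Real.zero_rpow (by linarith), zero_mul]; exact norm_nonneg _
    · rw [norm_smul, Real.norm_of_nonneg (by positivity), ← mul_assoc, hrp t ht', one_mul]
      exact y.norm_coe_le_norm t
  · intro t ht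
    have h := aux_scale_Phi α A Q g x₀ y (fun t => t ^ (α - 1) • y t) hyφ t ht
    rw [← hΦ, hyfix] at h
    have h2 := congrArg (fun v => t ^ (α - 1) • v) h
    rw [smul_smul, mul_comm, hrp t ht, one_smul] at h2
    exact h2.symm
  · rintro ψ ⟨hψc, ⟨l, hl⟩, ⟨K, hK⟩⟩ hψ
    let z0 : ℝ → Fin s → ℝ := fun t => if t ≤ 0 then l else t ^ (1 - α) • ψ t
    have hz0pos : ∀ t > (0:ℝ), z0 t = t ^ (1 - α) • ψ t := fun t ht => if_neg (not_le.2 ht)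
    have hz0neg : ∀ t ≤ (0:ℝ), z0 t = l := fun t ht => if_pos ht
    have hlim : Tendsto z0 (𝓝[>] 0) (𝓝 l) := by
      refine hl.congr' ?_
      filter_upwards [self_mem_nhdsWithin] with t ht
      exact (hz0pos t ht).symm
    have hz0c : Continuous z0 := by
      rw [continuous_iff_continuousAt]
      intro t
      rcases lt_trichotomy t 0 with ht | rfl | ht
      · have : z0 =ᶠ[𝓝 t] fun _ => l := by
          filter_upwards [Iio_mem_nhds ht] with τ hτ
          exact hz0neg τ (le_of_lt hτ)
        exact continuousAt_const.congr this.symm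
      · rw [continuousAt_iff_continuous_left'_right']
        constructor
        · have : z0 =ᶠ[𝓝[<] 0] fun _ => z0 0 := by
            filter_upwards [self_mem_nhdsWithin] with τ hτ
            rw [hz0neg τ (le_of_lt hτ), hz0neg 0 le_rfl]
          exact tendsto_const_nhds.congr' this.symm
        · show Tendsto z0 (𝓝[>] 0) (𝓝 (z0 0))
          rw [hz0neg 0 le_rfl]; exact hlim
      · have : z0 =ᶠ[𝓝 t] fun τ => τ ^ (1 - α) • ψ τ := by
          filter_upwards [Ioi_mem_nhds ht] with τ hτ
          exact hz0pos τ hτ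
        refine ContinuousAt.congr ?_ this.symm
        exact ((hcrp _).smul hψc).continuousAt (Ioi_mem_nhds ht)
    have hz0b : ∀ t, ‖z0 t‖ ≤ max K ‖l‖ := by
      intro t
      rcases le_or_gt t 0 with ht | ht
      · rw [hz0neg t ht]; exact le_max_right _ _
      · rw [hz0pos t ht, norm_smul, Real.norm_of_nonneg (by positivity)]
        exact (hK t ht.le).trans (le_max_left _ _)
    let z : BoundedContinuousFunction ℝ (Fin s → ℝ) :=
      BoundedContinuousFunction.ofNormedAddCommGroup z0 hz0c _ hz0b
    have hzpos : ∀ t > (0:ℝ), Φ z t = z0 t := by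
      intro t ht
      have h := aux_scale_Phi α A Q g x₀ z0 ψ hz0pos t ht
      rw [← hψ t ht, ← hz0pos t ht] at h
      exact h.symm
    have hz0 : Φ z 0 = l := by
      have h1 : Tendsto (Φ z) (𝓝[>] 0) (𝓝 (Φ z 0)) :=
        ((Φ z).continuous.tendsto 0).mono_left nhdsWithin_le_nhds
      refine tendsto_nhds_unique h1 (hlim.congr' ?_)
      filter_upwards [self_mem_nhdsWithin] with t ht
      exact (hzpos t ht).symm
    have hzfix : Φ z = z := by
      ext1 t
      show Φ z t = z0 t
      rcases le_or_gt t 0 with ht | ht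
      · rw [hz0neg t ht, ← hz0, hΦ, hΦ]
        unfold auxPhi auxQ auxG
        rw [max_eq_right ht, max_self]
      · exact hzpos t ht
    have hzy : z = y := hcontr.fixedPoint_unique hzfix
    intro t ht
    have h3 : z0 t = y t := congrArg (fun v : BoundedContinuousFunction ℝ (Fin s → ℝ) => v t) hzy
    show ψ t = t ^ (α - 1) • y t
    rw [← h3, hz0pos t ht, smul_smul, mul_comm, hrp t ht, one_smul]
  · have h1 : Tendsto (fun t : ℝ => t ^ (α - 1) * ‖y‖) atTop (𝓝 0) := by
      have h2 := (tendsto_rpow_neg_atTop (y := 1 - α) (by linarith)).mul_const ‖y‖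
      rw [zero_mul] at h2
      simpa using h2
    refine squeeze_zero_norm' ?_ h1
    filter_upwards [eventually_gt_atTop 0] with t ht
    rw [norm_smul, Real.norm_of_nonneg (by positivity)]
    exact mul_le_mul_of_nonneg_left (y.norm_coe_le_norm t) (by positivity)
end
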